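/- arXiv:math/0608328 — 3 statements merged into one kernel-verified Lean document; each statement's English description precedes it below -/
import Mathlib

section
/- Let p > 3 be a prime and let r be an integer with 1 ≤ r ≤ p−1. Then (−1)^{r+1}·binom(2p−1, p−r−1) ≡ −2p²·H_r² + 2p·H_r − 1 (mod p³). -/
open Finset

/-- `x ≡ y (mod p^c)` for rationals: `x = y` or the `p`-adic valuation of `x - y`
is at least `c`. -/
def modCong (p : ℕ) (c : ℤ) (x y : ℚ) : Prop :=
  x = y ∨ c ≤ padicValRat p (x - y)

/-- Harmonic number `H_r = ∑_{k=1}^r 1/k`. -/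
def harm (r : ℕ) : ℚ := ∑ k ∈ Finset.Icc 1 r, 1/(k:ℚ)

/-- The inverse of an integer prime to `p` is `p`-integral. -/
lemma inv_intCast_mem_integer {p : ℕ} [Fact p.Prime] {m : ℤ} (hm : ¬ (p : ℤ) ∣ m) :
    (m : ℚ)⁻¹ ∈ (Rat.padicValuation p).integer := by
  have hm0 : m ≠ 0 := by rintro rfl; simp at hm
  rw [Valuation.mem_integer_iff, Rat.padicValuation_le_one_iff, Rat.inv_intCast_den, if_neg hm0]
  rwa [← Int.natCast_dvd]

/-- The inverse of a natural number prime to `p` is `p`-integral. -/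
lemma inv_natCast_mem_integer {p : ℕ} [Fact p.Prime] {m : ℕ} (hm : ¬ p ∣ m) :
    (m : ℚ)⁻¹ ∈ (Rat.padicValuation p).integer := by
  have := inv_intCast_mem_integer (p := p) (m := m) (by exact_mod_cast hm)
  exact_mod_cast this

lemma modCong_of_sub_eq {p : ℕ} [hp : Fact p.Prime] {c : ℕ} {x y z : ℚ}
    (hz : z ∈ (Rat.padicValuation p).integer) (h : x - y = (p : ℚ) ^ c * z) :
    modCong p c x y := by
  rcases eq_or_ne z 0 with rfl | hz0
  · left
    simpa [sub_eq_zero] using h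
  · right
    have hp0 : (p : ℚ) ≠ 0 := by exact_mod_cast hp.out.ne_zero
    rw [Valuation.mem_integer_iff, Rat.padicValuation_le_one_iff] at hz
    rw [h, padicValRat.mul (pow_ne_zero _ hp0) hz0, padicValRat.pow,
      padicValRat.self hp.out.one_lt, padicValRat, padicValNat.eq_zero_of_not_dvd hz]
    simp

/-- The squares of the inverses of `1, …, p - 1` sum to zero modulo `p`. -/
lemma sum_Icc_inv_sq_zmod {p : ℕ} [hp : Fact p.Prime] (hp3 : 3 < p) :
    ∑ k ∈ Icc 1 (p - 1), ((k : ZMod p)⁻¹) ^ 2 = 0 := by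
  have hsum : ∑ x : ZMod p, (x⁻¹) ^ 2 = 0 := by
    rw [← FiniteField.sum_pow_lt_card_sub_one (ZMod p) 2 (by rw [ZMod.card]; omega)]
    exact Equiv.sum_comp (Equiv.inv (ZMod p)) fun x => x ^ 2
  have hrange : ∑ k ∈ range p, ((k : ZMod p)⁻¹) ^ 2 = ∑ x : ZMod p, (x⁻¹) ^ 2 :=
    sum_nbij' (fun k => (k : ZMod p)) ZMod.val (by simp)
      (fun x _ => mem_range.2 x.val_lt)
      (fun k hk => ZMod.val_cast_of_lt (mem_range.1 hk)) (by simp) (by simp)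
  rw [← hsum, ← hrange]
  refine sum_subset (fun k hk => ?_) fun k hk hk' => ?_
  · simp only [mem_Icc, mem_range] at *
    omega
  · obtain rfl : k = 0 := by
      simp only [mem_Icc, mem_range] at *
      omega
    simp

/-- **Wolstenholme's theorem** for harmonic numbers: `p ^ 2` divides `H_{p-1}`. -/
lemma exists_harm_pred_prime_eq {p : ℕ} [hp : Fact p.Prime] (hp3 : 3 < p) :
    ∃ z ∈ (Rat.padicValuation p).integer, harm (p - 1) = (p : ℚ) ^ 2 * z := by
  set R := (Rat.padicValuation p).integer
  have hnd : ∀ k ∈ Icc 1 (p - 1), ¬ p ∣ k := fun k hk h => by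
    have := Nat.le_of_dvd (mem_Icc.1 hk).1 h
    have := (mem_Icc.1 hk).2
    omega
  have hflip : ∀ k ∈ Icc 1 (p - 1), p - k ∈ Icc 1 (p - 1) := fun k hk => by
    simp only [mem_Icc] at *
    omega
  let j : ℕ → ℕ := fun k => ((k : ZMod p)⁻¹).val
  have hterm : ∀ k ∈ Icc 1 (p - 1), ∃ w ∈ R,
      (k : ℚ)⁻¹ * ((p - k : ℕ) : ℚ)⁻¹ = p * w - (j k : ℚ) ^ 2 := by
    intro k hk
    have hk0 : (k : ZMod p) ≠ 0 := by
      rw [Ne, ZMod.natCast_eq_zero_iff]; exact hnd k hk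
    have hdvd : (p : ℤ) ∣ (k * j k - 1 : ℤ) := by
      rw [← ZMod.intCast_zmod_eq_zero_iff_dvd]
      simp [j, hk0]
    obtain ⟨m, hm⟩ := hdvd
    have hkp : k ≤ p := by have := (mem_Icc.1 hk).2; omega
    have hkj : (k : ℚ) * j k = 1 + p * m := by
      have : (k * j k - 1 : ℚ) = p * m := by exact_mod_cast hm
      linarith
    have hkQ : (k : ℚ) ≠ 0 := by have := (mem_Icc.1 hk).1; positivity
    have hpkQ : ((p - k : ℕ) : ℚ) ≠ 0 := by
      have := (mem_Icc.1 (hflip k hk)).1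
      positivity
    refine ⟨(((j k ^ 2 * k - 2 * m - p * m ^ 2 : ℤ)) : ℚ) *
      ((k : ℚ)⁻¹ * ((p - k : ℕ) : ℚ)⁻¹), R.mul_mem (intCast_mem R _)
      (R.mul_mem (inv_natCast_mem_integer (hnd k hk))
        (inv_natCast_mem_integer (hnd _ (hflip k hk)))), ?_⟩
    field_simp
    push_cast [Nat.cast_sub hkp]
    linear_combination (-((k : ℚ) * j k) - (1 + p * m)) * hkj
  choose! w hwR hw using hterm
  obtain ⟨t, ht⟩ : (p : ℤ) ∣ ∑ k ∈ Icc 1 (p - 1), (j k : ℤ) ^ 2 := by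
    rw [← ZMod.intCast_zmod_eq_zero_iff_dvd]
    simpa [j] using sum_Icc_inv_sq_zmod hp3
  have htQ : ∑ k ∈ Icc 1 (p - 1), (j k : ℚ) ^ 2 = p * t := by exact_mod_cast ht
  have hreflect : harm (p - 1) = ∑ k ∈ Icc 1 (p - 1), ((p - k : ℕ) : ℚ)⁻¹ := by
    unfold harm
    refine sum_nbij' (fun k => p - k) (fun k => p - k) hflip hflip ?_ ?_ ?_ <;>
    · intro k hk
      have : p - (p - k) = k := by have := (mem_Icc.1 hk).2; omega
      simp [this]
  have hdouble : 2 * harm (p - 1) = p * ∑ k ∈ Icc 1 (p - 1), (k : ℚ)⁻¹ * ((p - k : ℕ) : ℚ)⁻¹ := by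
    rw [two_mul]
    nth_rewrite 2 [hreflect]
    rw [harm, ← sum_add_distrib, mul_sum]
    refine sum_congr rfl fun k hk => ?_
    have hkp : k ≤ p := by have := (mem_Icc.1 hk).2; omega
    have hkQ : (k : ℚ) ≠ 0 := by have := (mem_Icc.1 hk).1; positivity
    have hpkQ : ((p - k : ℕ) : ℚ) ≠ 0 := by
      have := (mem_Icc.1 (hflip k hk)).1
      positivity
    field_simp
    push_cast [Nat.cast_sub hkp]
    ring
  rw [sum_congr rfl hw, sum_sub_distrib, ← mul_sum, htQ] at hdouble
  have htwo : ((2 : ℕ) : ℚ)⁻¹ ∈ R :=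
    inv_natCast_mem_integer fun h => by have := Nat.le_of_dvd two_pos h; omega
  refine ⟨((2 : ℕ) : ℚ)⁻¹ * (∑ k ∈ Icc 1 (p - 1), w k - t),
    R.mul_mem htwo (R.sub_mem (R.sum_mem hwR) (intCast_mem R t)), ?_⟩
  push_cast
  linear_combination hdouble / 2

lemma harm_mem_integer {p : ℕ} [Fact p.Prime] {r : ℕ} (hr : r < p) :
    harm r ∈ (Rat.padicValuation p).integer := by
  refine Subring.sum_mem _ fun k hk => ?_
  rw [one_div]
  refine inv_natCast_mem_integer fun h => ?_
  have := Nat.le_of_dvd (mem_Icc.1 hk).1 h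
  have := (mem_Icc.1 hk).2
  omega

lemma harm_succ (r : ℕ) : harm (r + 1) = harm r + ((r + 1 : ℕ) : ℚ)⁻¹ := by
  rw [harm, sum_Icc_succ_top (by omega), harm, one_div]

/-- The ratio of consecutive signed binomial coefficients. -/
lemma signed_choose_succ {p r : ℕ} (hr : r + 1 < p) :
    ((-1 : ℚ) ^ (r + 1) * ((2 * p - 1).choose (p - r - 1))) * (((r + 1 : ℕ) : ℚ) - p) =
      ((-1 : ℚ) ^ (r + 1 + 1) * ((2 * p - 1).choose (p - (r + 1) - 1))) *
        (((r + 1 : ℕ) : ℚ) + p) := by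
  obtain ⟨s, rfl⟩ : ∃ s, p = r + 2 + s := ⟨p - (r + 2), by omega⟩
  have h := Nat.choose_succ_right_eq (2 * (r + 2 + s) - 1) s
  rw [show 2 * (r + 2 + s) - 1 - s = r + 1 + (r + 2 + s) by omega] at h
  rw [show r + 2 + s - r - 1 = s + 1 by omega, show r + 2 + s - (r + 1) - 1 = s by omega]
  have hQ : ((2 * (r + 2 + s) - 1).choose (s + 1) : ℚ) * (s + 1) =
      (2 * (r + 2 + s) - 1).choose s * (r + 1 + (r + 2 + s)) := by exact_mod_cast h
  push_cast
  linear_combination (-(-1 : ℚ) ^ (r + 1)) * hQ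

/-- The congruence of `stmt0` with an explicit `p`-integral quotient. -/
lemma exists_signed_choose_sub_eq {p : ℕ} [hp : Fact p.Prime] (hp3 : 3 < p) {r : ℕ}
    (hr : r ≤ p - 1) :
    ∃ z ∈ (Rat.padicValuation p).integer,
      (-1 : ℚ) ^ (r + 1) * ((2 * p - 1).choose (p - r - 1)) -
        (-2 * (p : ℚ) ^ 2 * (harm r) ^ 2 + 2 * (p : ℚ) * harm r - 1) = (p : ℚ) ^ 3 * z := by
  set R := (Rat.padicValuation p).integer
  have hpR : (p : ℚ) ∈ R := natCast_mem R p
  have h2R : (2 : ℚ) ∈ R := ofNat_mem R 2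
  induction hr using Nat.decreasingInduction with
  | self =>
    obtain ⟨z, hz, h⟩ := exists_harm_pred_prime_eq hp3
    refine ⟨2 * (p : ℚ) ^ 3 * z ^ 2 - 2 * z, R.sub_mem (R.mul_mem (R.mul_mem h2R
      (R.pow_mem hpR 3)) (R.pow_mem hz 2)) (R.mul_mem h2R hz), ?_⟩
    have hodd : Odd p := hp.out.odd_of_ne_two (by omega)
    rw [h, show p - 1 + 1 = p by omega, show p - (p - 1) - 1 = 0 by omega, hodd.neg_one_pow]
    simp only [Nat.choose_zero_right, Nat.cast_one]
    ring
  | of_succ r hr ih =>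
    obtain ⟨z, hz, h⟩ := ih
    have hstep := signed_choose_succ (p := p) (r := r) (by omega)
    rw [harm_succ] at h
    have hH : harm r ∈ R := harm_mem_integer (by omega)
    have hnd : ¬ p ∣ r + 1 := fun hd => by
      have := Nat.le_of_dvd (Nat.succ_pos r) hd
      omega
    have hnd' : ¬ (p : ℤ) ∣ ((r + 1 : ℕ) : ℤ) - p := by
      rw [dvd_sub_self_right]
      exact_mod_cast hnd
    have hxR : ((r + 1 : ℕ) : ℚ)⁻¹ ∈ R := inv_natCast_mem_integer hnd
    have hkR : ((r + 1 : ℕ) : ℚ) ∈ R := natCast_mem R _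
    have huR := inv_intCast_mem_integer hnd'
    have hk0 : ((r + 1 : ℕ) : ℚ) ≠ 0 := by positivity
    have hu0 : ((r + 1 : ℕ) : ℚ) - p ≠ 0 := by
      have : (r + 1 : ℕ) < p := by omega
      have : ((r + 1 : ℕ) : ℚ) < p := by exact_mod_cast this
      linarith
    rw [Int.cast_sub, Int.cast_natCast, Int.cast_natCast] at huR
    generalize ((r + 1 : ℕ) : ℚ) = k at *
    generalize (-1 : ℚ) ^ (r + 1) * ((2 * p - 1).choose (p - r - 1)) = a at *
    generalize (-1 : ℚ) ^ (r + 1 + 1) * ((2 * p - 1).choose (p - (r + 1) - 1)) = b at *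
    generalize harm r = H at *
    refine ⟨(z * (k + p) - 2 * (H ^ 2 + (H + k⁻¹) ^ 2)) * (k - p)⁻¹,
      R.mul_mem (R.sub_mem (R.mul_mem hz (R.add_mem hkR hpR)) (R.mul_mem h2R
        (R.add_mem (R.pow_mem hH 2) (R.pow_mem (R.add_mem hH hxR) 2)))) huR, ?_⟩
    have hkx : k * k⁻¹ = 1 := mul_inv_cancel₀ hk0
    rw [← mul_assoc, eq_mul_inv_iff_mul_eq₀ hu0]
    generalize k⁻¹ = x at *
    linear_combination hstep + (k + p) * h + (2 * p - 4 * p ^ 2 * H - 2 * p ^ 2 * x) * hkx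

theorem stmt0 (p : ℕ) (hp : p.Prime) (hp3 : 3 < p) (r : ℕ) (hr1 : 1 ≤ r) (hr2 : r ≤ p - 1) :
    modCong p 3 ((-1:ℚ)^(r+1) * ((2*p-1).choose (p-r-1)))
      (-2 * (p:ℚ)^2 * (harm r)^2 + 2 * (p:ℚ) * harm r - 1) := by
  have : Fact p.Prime := ⟨hp⟩
  obtain ⟨z, hz, h⟩ := exists_signed_choose_sub_eq hp3 hr2
  exact modCong_of_sub_eq hz h
end

section
/- Let p be a prime, let r be an integer, and let m,n be nonnegative integers with m ≠ n and m ≡ n (mod p(p−1)). Then (F_p(m,r) − F_p(n,r))/(m − n) ≡ ((−1)^{n^*}/n^*!)·Σ_{k=2}^{n^*} binom(n^*,k)·(B_k/k)·B^{(μ)}_{n^*−k}(−r) (mod p), where μ is the unique integer in {0,…,p−1} with μ ≡ −n (mod p). -/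
open Finset

/-- `C_p(n,r) = ∑_{0 ≤ k ≤ n, k ≡ r (mod p)} (-1)^k * binom(n,k)`. -/
def Cp (p n : ℕ) (r : ℤ) : ℚ :=
  ∑ k ∈ range (n+1), if ((k : ℤ) - r) % p = 0 then (-1 : ℚ)^k * (n.choose k) else 0

/-- The Fleck quotient `F_p(n,r) = (-p)^{-⌊(n-1)/(p-1)⌋} C_p(n,r) + [n = 0]`. -/
noncomputable def Fp (p n : ℕ) (r : ℤ) : ℚ :=
  (-(p:ℚ)) ^ (-(Int.fdiv ((n:ℤ) - 1) ((p:ℤ) - 1))) * Cp p n r + (if n = 0 then 1 else 0)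

/-- `n^*`: the unique integer in `{0,…,p-2}` with `n^* ≡ -n (mod p-1)`. -/
def nUp (p n : ℕ) : ℕ := ((-(n:ℤ)) % ((p:ℤ) - 1)).toNat

/-- The `m`-th order Bernoulli number
`B_k^{(m)} = k! ∑_{i₁+⋯+i_m = k} ∏_j B_{i_j}/i_j!`. -/
noncomputable def bernHigher (m k : ℕ) : ℚ :=
  (k.factorial : ℚ) *
    ∑ i ∈ Finset.Nat.antidiagonalTuple m k, ∏ j, bernoulli (i j) / (i j).factorial

/-- The `m`-th order Bernoulli polynomial
`B_k^{(m)}(t) = ∑_{j=0}^k binom(k,j) B_j^{(m)} t^{k-j}`. -/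
noncomputable def bernHigherPoly (m k : ℕ) (t : ℚ) : ℚ :=
  ∑ j ∈ range (k+1), (k.choose j : ℚ) * bernHigher m j * t^(k-j)

section Algebra

open Polynomial

/-- The sum of the coefficients of `f` whose index is congruent to `r` modulo `p`. -/
noncomputable def residueSum (p : ℕ) (r : ℤ) : ℤ[X] →ₗ[ℤ] ℤ :=
  Polynomial.lsum fun k => if ((k : ℤ) - r) % p = 0 then LinearMap.id else 0

lemma residueSum_monomial (p : ℕ) (r : ℤ) (k : ℕ) (c : ℤ) :
    residueSum p r (monomial k c) = if ((k : ℤ) - r) % p = 0 then c else 0 := by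
  have : residueSum p r (monomial k c) =
      (if ((k : ℤ) - r) % p = 0 then LinearMap.id else 0 : ℤ →ₗ[ℤ] ℤ) c :=
    sum_monomial_index c _ (by simp)
  rw [this]
  split_ifs <;> rfl

lemma residueSum_X_pow_sub_one_mul (p : ℕ) (r : ℤ) (f : ℤ[X]) :
    residueSum p r ((X ^ p - 1) * f) = 0 := by
  induction f using Polynomial.induction_on' with
  | add f g hf hg => rw [mul_add, map_add, hf, hg, add_zero]
  | monomial k c =>
    have h : ((k + p : ℕ) - r : ℤ) % p = ((k : ℤ) - r) % p := by
      rw [Nat.cast_add, add_sub_right_comm, Int.add_emod_right]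
    rw [sub_mul, one_mul, X_pow_mul, monomial_mul_X_pow, map_sub]
    simp only [residueSum_monomial, h, sub_self]

lemma residueSum_congr {p : ℕ} (r : ℤ) {f g : ℤ[X]}
    (h : AdjoinRoot.mk (X ^ p - 1) f = AdjoinRoot.mk (X ^ p - 1) g) :
    residueSum p r f = residueSum p r g := by
  obtain ⟨k, hk⟩ := AdjoinRoot.mk_eq_mk.mp h
  rw [← sub_eq_zero, ← map_sub, hk, residueSum_X_pow_sub_one_mul]

lemma residueSum_natCast_mul (p : ℕ) (r : ℤ) (k : ℕ) (f : ℤ[X]) :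
    residueSum p r ((k : ℤ[X]) * f) = k * residueSum p r f := by
  rw [← nsmul_eq_mul, map_nsmul, nsmul_eq_mul]

lemma Cp_eq_residueSum (p n : ℕ) (r : ℤ) : Cp p n r = residueSum p r ((1 - X) ^ n) := by
  have h : ((1 - X) ^ n : ℤ[X]) = ∑ k ∈ range (n + 1), monomial k ((-1) ^ k * (n.choose k : ℤ)) := by
    rw [sub_eq_add_neg, add_comm, add_pow]
    refine sum_congr rfl fun k _ => ?_
    rw [← C_mul_X_pow_eq_monomial, neg_pow]
    simp only [one_pow, map_mul, map_pow, map_neg, map_one, map_natCast]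
    ring
  rw [h, map_sum, Cp, Int.cast_sum]
  refine sum_congr rfl fun k _ => ?_
  rw [residueSum_monomial]
  split_ifs <;> simp

lemma residueSum_geom_sum (p : ℕ) (hp : 0 < p) (r : ℤ) :
    residueSum p r (∑ i ∈ range p, X ^ i) = 1 := by
  have hp' : (0 : ℤ) < p := by exact_mod_cast hp
  have hr := Int.emod_nonneg r hp'.ne'
  have hlt := Int.emod_lt_of_pos r hp'
  rw [map_sum, sum_eq_single (r % p).toNat]
  · rw [X_pow_eq_monomial, residueSum_monomial, if_pos]
    rw [Int.toNat_of_nonneg hr]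
    exact Int.emod_eq_emod_iff_emod_sub_eq_zero.mp (Int.emod_emod r p)
  · intro k hk hne
    rw [X_pow_eq_monomial, residueSum_monomial, if_neg]
    intro h
    have h2 : (k : ℤ) % p = r % p := 
      Int.emod_eq_emod_iff_emod_sub_eq_zero.mpr h
    rw [Int.emod_eq_of_lt (by positivity) (by exact_mod_cast mem_range.mp hk)] at h2
    omega
  · intro h
    rw [mem_range] at h
    omega

lemma exists_geom_sum_sub_eq (p : ℕ) [Fact p.Prime] :
    ∃ u : ℤ[X], ∑ i ∈ range p, X ^ i - (1 - X) ^ (p - 1) = (p : ℤ[X]) * u := by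
  have h : C (p : ℤ) ∣ ∑ i ∈ range p, (X : ℤ[X]) ^ i - (1 - X) ^ (p - 1) := by
    rw [C_dvd_iff_dvd_coeff]
    intro i
    rw [← ZMod.intCast_zmod_eq_zero_iff_dvd, ← eq_intCast (Int.castRingHom (ZMod p)), ← coeff_map]
    have h0 := cyclotomic_mul_prime_eq_pow_of_not_dvd (ZMod p) (p := p) (n := 1)
      (fun h => (Fact.out : p.Prime).one_lt.ne' (Nat.dvd_one.mp h))
    have h1 : (1 - X : (ZMod p)[X]) ^ (p - 1) = (X - 1) ^ (p - 1) := by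
      rcases (Fact.out : p.Prime).eq_two_or_odd' with rfl | hodd
      · simp [sub_eq_add_neg, CharTwo.neg_eq, add_comm]
      · rw [← neg_sub, (Nat.Odd.sub_odd hodd odd_one).neg_pow]
    rw [one_mul, cyclotomic_prime, cyclotomic_one, ← h1] at h0
    simp only [Polynomial.map_sub, Polynomial.map_sum, Polynomial.map_pow, map_X,
      Polynomial.map_one, h0, sub_self, coeff_zero]
  obtain ⟨u, hu⟩ := h
  exact ⟨u, by rw [hu]; simp⟩

lemma one_sub_X_mul_geom_sum (p : ℕ) :
    (1 - X : ℤ[X]) * ∑ i ∈ range p, X ^ i = 1 - X ^ p := mul_neg_geom_sum _ _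

variable {p : ℕ} {u : ℤ[X]}

lemma eval_one_of_geom_sum_sub_eq (hp : p.Prime)
    (hu : ∑ i ∈ range p, X ^ i - (1 - X) ^ (p - 1) = (p : ℤ[X]) * u) : u.eval 1 = 1 := by
  have h := congrArg (eval 1) hu
  have h1 : p - 1 ≠ 0 := Nat.sub_ne_zero_of_lt hp.one_lt
  have h2 : (p : ℤ) ≠ 0 := by exact_mod_cast hp.ne_zero
  simp [eval_finsetSum, h1] at h
  exact mul_left_cancel₀ h2 (by rw [← h, mul_one])

lemma exists_eq_one_add_of_eval_one {f : ℤ[X]} {c : ℤ} (h : f.eval 1 = c) :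
    ∃ w : ℤ[X], f = C c + (1 - X) * w := by
  obtain ⟨w, hw⟩ := X_sub_C_dvd_sub_C_eval (a := 1) (p := f)
  refine ⟨-w, ?_⟩
  rw [h] at hw
  simp only [map_one] at hw
  linear_combination hw

lemma exists_pow_prime_eq [hp : Fact p.Prime]
    (hu : ∑ i ∈ range p, X ^ i - (1 - X) ^ (p - 1) = (p : ℤ[X]) * u) {w : ℤ[X]}
    (hw : u = 1 + (1 - X) * w) :
    ∃ v : ℤ[X], u ^ p = 1 + (p : ℤ[X]) * v - (X ^ p - 1) * w ^ p := by
  obtain ⟨q, hq⟩ := exists_add_pow_prime_eq hp.out (1 : ℤ[X]) ((1 - X) * w)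
  have hpow : (1 - X : ℤ[X]) ^ p = (1 - X) * (1 - X) ^ (p - 1) :=
    (mul_pow_sub_one hp.out.ne_zero _).symm
  have hN := one_sub_X_mul_geom_sum p
  refine ⟨1 * ((1 - X) * w) * q - (1 - X) * u * w ^ p, ?_⟩
  conv_lhs => rw [hw, hq, mul_pow, hpow]
  linear_combination w ^ p * hN - (1 - X) * w ^ p * hu

/-- `π ^ (i + (p - 1) j) = (-p u) ^ j π ^ i` modulo `X ^ p - 1`, where `π = 1 - X`. -/
lemma mk_one_sub_X_pow
    (hu : ∑ i ∈ range p, X ^ i - (1 - X) ^ (p - 1) = (p : ℤ[X]) * u) {i : ℕ} (hi : i ≠ 0) (j : ℕ) :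
    AdjoinRoot.mk (X ^ p - 1) ((1 - X) ^ (i + (p - 1) * j)) =
      AdjoinRoot.mk (X ^ p - 1) ((-(p : ℤ[X])) ^ j * (u ^ j * (1 - X) ^ i)) := by
  have hN := one_sub_X_mul_geom_sum p
  obtain ⟨i, rfl⟩ := Nat.exists_eq_succ_of_ne_zero hi
  induction j with
  | zero => simp
  | succ j ih =>
    have h : AdjoinRoot.mk (X ^ p - 1) ((1 - X) * (1 - X) ^ (p - 1)) =
        AdjoinRoot.mk (X ^ p - 1) (-(p : ℤ[X]) * u * (1 - X)) := by
      rw [AdjoinRoot.mk_eq_mk]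
      exact ⟨-1, by linear_combination hN - (1 - X) * hu⟩
    have e1 : (1 - X : ℤ[X]) ^ (i.succ + (p - 1) * (j + 1)) =
        (1 - X) ^ (i.succ + (p - 1) * j) * (1 - X) ^ (p - 1) := by ring
    rw [e1, map_mul, ih, ← map_mul]
    have e2 : (-(p : ℤ[X])) ^ j * (u ^ j * (1 - X) ^ i.succ) * (1 - X) ^ (p - 1) =
        (-(p : ℤ[X])) ^ j * u ^ j * (1 - X) ^ i * ((1 - X) * (1 - X) ^ (p - 1)) := by
      rw [pow_succ]; ring
    rw [e2, map_mul, h, ← map_mul]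
    congr 1
    rw [pow_succ (1 - X : ℤ[X]) i]
    ring

lemma Fp_eq_residueSum (hp : p.Prime)
    (hu : ∑ i ∈ range p, X ^ i - (1 - X) ^ (p - 1) = (p : ℤ[X]) * u) {i : ℕ} (hi : i ≠ 0)
    (hi' : i ≤ p - 1) (j : ℕ) (r : ℤ) :
    Fp p (i + (p - 1) * j) r = residueSum p r (u ^ j * (1 - X) ^ i) := by
  have h1 := hp.one_lt
  have hdiv : Int.fdiv (((i + (p - 1) * j : ℕ) : ℤ) - 1) ((p : ℤ) - 1) = j := by
    obtain ⟨q, rfl⟩ : ∃ q, p = q + 1 := ⟨p - 1, by omega⟩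
    rw [Int.fdiv_eq_ediv_of_nonneg _ (by omega)]
    push_cast
    simp only [add_sub_cancel_right, Nat.add_sub_cancel] at *
    rw [show (i : ℤ) + q * j - 1 = (i - 1) + q * j by ring, Int.add_mul_ediv_left _ _ (by omega),
      Int.ediv_eq_zero_of_lt (by omega) (by omega), zero_add]
  have hne : (-(p : ℚ)) ^ j ≠ 0 := pow_ne_zero _ (neg_ne_zero.mpr (by exact_mod_cast hp.ne_zero))
  have hsmul : (-(p : ℤ[X])) ^ j * (u ^ j * (1 - X) ^ i) =
      ((-(p : ℤ)) ^ j) • (u ^ j * (1 - X) ^ i) := by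
    rw [zsmul_eq_mul]; push_cast; rfl
  rw [Fp, hdiv, if_neg (by omega), add_zero, Cp_eq_residueSum,
    residueSum_congr r (mk_one_sub_X_pow hu hi j), hsmul, map_smul, zpow_neg, zpow_natCast]
  simp only [smul_eq_mul]
  push_cast
  rw [inv_mul_cancel_left₀ hne]

lemma Fp_zero (hp : p.Prime) (r : ℤ) :
    Fp p 0 r = residueSum p r (∑ i ∈ range p, X ^ i - (p : ℤ[X])) := by
  have h1 := hp.one_lt
  have hdiv : Int.fdiv (((0 : ℕ) : ℤ) - 1) ((p : ℤ) - 1) = -1 := by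
    rw [Int.fdiv_eq_ediv_of_nonneg _ (by omega)]
    rw [Int.ediv_eq_iff_of_pos (by omega)]
    constructor <;> push_cast <;> omega
  rw [map_sub, residueSum_geom_sum p hp.pos, ← mul_one (p : ℤ[X]), residueSum_natCast_mul, Fp, hdiv,
    Cp_eq_residueSum]
  simp
  ring

lemma Fp_mul_eq_residueSum (hp : p.Prime)
    (hu : ∑ i ∈ range p, X ^ i - (1 - X) ^ (p - 1) = (p : ℤ[X]) * u) (s : ℕ) (r : ℤ) :
    Fp p ((p - 1) * s) r = residueSum p r (∑ i ∈ range p, X ^ i - (p : ℤ[X]) * u ^ s) := by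
  cases s with
  | zero => simpa using Fp_zero hp r
  | succ s =>
    have h1 := hp.one_lt
    rw [show (p - 1) * (s + 1) = (p - 1) + (p - 1) * s by ring,
      Fp_eq_residueSum hp hu (by omega) le_rfl]
    refine congrArg _ (residueSum_congr r ?_)
    rw [AdjoinRoot.mk_eq_mk]
    obtain ⟨w, hw⟩ := exists_eq_one_add_of_eval_one (f := u ^ s) (c := 1)
      (by rw [eval_pow, eval_one_of_geom_sum_sub_eq hp hu, one_pow])
    refine ⟨-w, ?_⟩
    rw [map_one] at hw
    linear_combination (∑ i ∈ range p, X ^ i) * hw - u ^ s * hu + w * one_sub_X_mul_geom_sum p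

end Algebra

section Powers

variable {R : Type*} [CommRing R] {p : ℕ}

lemma exists_one_add_pow_prime_pow (hodd : Odd p) (v : R) (j : ℕ) :
    ∃ z : R, (1 + p * v) ^ p ^ j = 1 + p ^ (j + 1) * v + p ^ (j + 2) * z := by
  induction j with
  | zero => exact ⟨0, by simp⟩
  | succ j ih =>
    obtain ⟨z, hz⟩ := ih
    obtain ⟨c, hc⟩ := odd_sq_dvd_geom_sum₂_sub (a := (1 : R)) (b := p ^ j * (v + p * z)) hodd
    have hg := geom_sum_mul (1 + p * (p ^ j * (v + p * z)) : R) p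
    simp only [one_pow, mul_one] at hc
    refine ⟨z + (v + p * z) * c, ?_⟩
    rw [pow_succ p j, pow_mul, hz]
    have e : (1 + p ^ (j + 1) * v + p ^ (j + 2) * z : R) = 1 + p * (p ^ j * (v + p * z)) := by ring
    rw [e]
    linear_combination -hg + p * (p ^ j * (v + p * z)) * hc

lemma exists_one_add_mul_pow (a y : R) (s : ℕ) :
    ∃ z : R, (1 + a * y) ^ s = 1 + s * (a * y) + a ^ 2 * z := by
  induction s with
  | zero => exact ⟨0, by simp⟩
  | succ s ih =>
    obtain ⟨z, hz⟩ := ih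
    refine ⟨z * (1 + a * y) + s * y ^ 2, ?_⟩
    rw [pow_succ, hz]
    push_cast
    ring

lemma exists_one_add_pow (hodd : Odd p) (v : R) (j s : ℕ) :
    ∃ z : R, (1 + p * v) ^ (p ^ j * s) = 1 + p ^ (j + 1) * s * v + p ^ (j + 2) * z := by
  obtain ⟨z, hz⟩ := exists_one_add_pow_prime_pow hodd v j
  obtain ⟨y, hy⟩ := exists_one_add_mul_pow ((p : R) ^ (j + 1)) (v + p * z) s
  refine ⟨s * z + p ^ j * y, ?_⟩
  rw [pow_mul, hz]
  have e : (1 + p ^ (j + 1) * v + p ^ (j + 2) * z : R) = 1 + p ^ (j + 1) * (v + p * z) := by ring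
  rw [e, hy]
  ring

end Powers

section Integrality

open PowerSeries

/-- The rational numbers that are integral at `p`. -/
def pIntegers (p : ℕ) [Fact p.Prime] : Subring ℚ where
  carrier := {q | padicNorm p q ≤ 1}
  mul_mem' {a b} ha hb := by
    simp only [Set.mem_ofPred_eq, padicNorm.mul] at *
    exact mul_le_one₀ ha (padicNorm.nonneg _) hb
  one_mem' := by simp
  add_mem' {a b} ha hb := padicNorm.nonarchimedean.trans (max_le ha hb)
  zero_mem' := by simp
  neg_mem' {a} ha := by simpa using ha

/-- The rational power series whose coefficients of index less than `N` are integral at `p`. -/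
def pIntegralSeries (p : ℕ) [Fact p.Prime] (N : ℕ) : Subring ℚ⟦X⟧ where
  carrier := {f | ∀ k < N, coeff k f ∈ pIntegers p}
  mul_mem' {f g} hf hg k hk := by
    rw [coeff_mul]
    refine sum_mem fun x hx => ?_
    rw [HasAntidiagonal.mem_antidiagonal] at hx
    exact mul_mem (hf _ (by omega)) (hg _ (by omega))
  one_mem' k _ := by
    rw [coeff_one]
    split_ifs
    exacts [one_mem _, zero_mem _]
  add_mem' {f g} hf hg k hk := by rw [map_add]; exact add_mem (hf k hk) (hg k hk)
  zero_mem' k _ := by rw [map_zero]; exact zero_mem _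
  neg_mem' {f} hf k hk := by rw [map_neg]; exact neg_mem (hf k hk)

/-- Congruence modulo `p` of the coefficients of index less than `N`. -/
def SeriesCong (p : ℕ) [Fact p.Prime] (N : ℕ) (f g : ℚ⟦X⟧) : Prop :=
  ∃ h ∈ pIntegralSeries p N, f = g + p * h

variable {p : ℕ} [hp : Fact p.Prime] {N : ℕ} {f g f' g' : ℚ⟦X⟧}

lemma inv_natCast_mem_pIntegers {k : ℕ} (hk : ¬p ∣ k) : (k : ℚ)⁻¹ ∈ pIntegers p := by
  change padicNorm p _ ≤ 1
  rw [← one_div, padicNorm.div, (padicNorm.nat_eq_one_iff k).mpr hk]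
  simp

lemma inv_factorial_mem_pIntegers {k : ℕ} (hk : k < p) : (k.factorial : ℚ)⁻¹ ∈ pIntegers p :=
  inv_natCast_mem_pIntegers fun h => hk.not_ge (hp.out.dvd_factorial.mp h)

lemma modCong_of_eq_add {x y z : ℚ} (hz : z ∈ pIntegers p) (h : x = y + p * z) :
    modCong p 1 x y := by
  by_cases h0 : z = 0
  · exact Or.inl (by rw [h, h0, mul_zero, add_zero])
  · refine Or.inr ?_
    have hp0 : (p : ℚ) ≠ 0 := by exact_mod_cast hp.out.ne_zero
    have hz' : padicNorm p z ≤ 1 := hz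
    rw [padicNorm.eq_zpow_of_nonzero h0,
      zpow_le_one_iff_right₀ (by exact_mod_cast hp.out.one_lt)] at hz'
    rw [h, add_sub_cancel_left, padicValRat.mul hp0 h0, padicValRat.self hp.out.one_lt]
    omega

lemma mem_pIntegralSeries_of_le {M : ℕ} (hMN : M ≤ N) (hf : f ∈ pIntegralSeries p N) :
    f ∈ pIntegralSeries p M := fun k hk => hf k (hk.trans_le hMN)

lemma X_pow_mul_mem_pIntegralSeries (f : ℚ⟦X⟧) : X ^ N * f ∈ pIntegralSeries p N := fun k hk => by
  rw [coeff_X_pow_mul', if_neg (by omega)]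
  exact zero_mem _

lemma C_mem_pIntegralSeries {c : ℚ} (hc : c ∈ pIntegers p) : C c ∈ pIntegralSeries p N :=
  fun k _ => by
    rw [coeff_C]
    split_ifs
    exacts [hc, zero_mem _]

lemma X_mem_pIntegralSeries : (X : ℚ⟦X⟧) ∈ pIntegralSeries p N := fun k _ => by
  rw [coeff_X]
  split_ifs
  exacts [one_mem _, zero_mem _]

lemma mem_pIntegralSeries_of_mul_eq_one (hf : f ∈ pIntegralSeries p N)
    (hf0 : constantCoeff f = 1) (hfg : f * g = 1) : g ∈ pIntegralSeries p N := by
  obtain ⟨q, hq⟩ : X ∣ 1 - f := X_dvd_iff.mpr (by simp [hf0])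
  have hsum := mul_neg_geom_sum (1 - f) N
  have hg : g = ∑ i ∈ range N, (1 - f) ^ i + X ^ N * (q ^ N * g) := by
    rw [← mul_assoc, ← mul_pow, ← hq]
    linear_combination (-g) * hsum + (∑ i ∈ range N, (1 - f) ^ i) * hfg
  rw [hg]
  exact add_mem (sum_mem fun i _ => pow_mem (sub_mem (one_mem _) hf) _)
    (X_pow_mul_mem_pIntegralSeries _)

lemma derivative_mem_pIntegralSeries (hf : f ∈ pIntegralSeries p (N + 1)) :
    d⁄dX ℚ f ∈ pIntegralSeries p N := fun k hk => by
  rw [coeff_derivative]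
  exact mul_mem (hf _ (by omega)) (add_mem (natCast_mem _ _) (one_mem _))

lemma mem_pIntegralSeries_of_derivative (hN : N < p) (hf0 : constantCoeff f ∈ pIntegers p)
    (hf : d⁄dX ℚ f ∈ pIntegralSeries p N) : f ∈ pIntegralSeries p (N + 1) := by
  rintro (_ | k) hk
  · simpa using hf0
  · have h := hf k (by omega)
    rw [coeff_derivative] at h
    have h' := mul_mem h (inv_natCast_mem_pIntegers (p := p) (k := k + 1)
      fun hd => (Nat.le_of_dvd k.succ_pos hd).not_gt (by omega))
    rwa [Nat.cast_add_one, mul_inv_cancel_right₀ (by positivity)] at h'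

lemma SeriesCong.refl (f : ℚ⟦X⟧) : SeriesCong p N f f := ⟨0, zero_mem _, by simp⟩

lemma SeriesCong.symm (h : SeriesCong p N f g) : SeriesCong p N g f := by
  obtain ⟨k, hk, rfl⟩ := h
  exact ⟨-k, neg_mem hk, by ring⟩

lemma SeriesCong.trans {k : ℚ⟦X⟧} (h : SeriesCong p N f g) (h' : SeriesCong p N g k) :
    SeriesCong p N f k := by
  obtain ⟨x, hx, rfl⟩ := h
  obtain ⟨y, hy, rfl⟩ := h'
  exact ⟨x + y, add_mem hx hy, by ring⟩

lemma SeriesCong.mul (h : SeriesCong p N f g) (h' : SeriesCong p N f' g')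
    (hf' : f' ∈ pIntegralSeries p N) (hg : g ∈ pIntegralSeries p N) :
    SeriesCong p N (f * f') (g * g') := by
  obtain ⟨x, hx, hfx⟩ := h
  obtain ⟨y, hy, hfy⟩ := h'
  refine ⟨x * f' + g * y, add_mem (mul_mem hx hf') (mul_mem hg hy), ?_⟩
  rw [hfx]
  linear_combination g * hfy

lemma SeriesCong.pow (h : SeriesCong p N f g) (hf : f ∈ pIntegralSeries p N)
    (hg : g ∈ pIntegralSeries p N) (n : ℕ) : SeriesCong p N (f ^ n) (g ^ n) := by
  induction n with
  | zero => simpa using SeriesCong.refl 1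
  | succ n ih => rw [pow_succ, pow_succ]; exact ih.mul h hf (pow_mem hg n)

lemma SeriesCong.pow_of_modEq (h : SeriesCong p N (f ^ p) 1) (hf : f ∈ pIntegralSeries p N)
    {a b : ℕ} (hab : a ≡ b [MOD p]) : SeriesCong p N (f ^ a) (f ^ b) := by
  have key : ∀ n, SeriesCong p N (f ^ n) (f ^ (n % p)) := fun n => by
    have h1 := (SeriesCong.refl (p := p) (N := N) (f ^ (n % p))).mul
      (h.pow (pow_mem hf p) (one_mem _) (n / p)) (pow_mem (pow_mem hf p) _) (pow_mem hf _)
    rwa [one_pow, mul_one, ← pow_mul, ← pow_add, Nat.mod_add_div] at h1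
  have h1 := key a
  rw [hab] at h1
  exact h1.trans (key b).symm

lemma exists_coeff_eq_of_SeriesCong (h : SeriesCong p N f g) {k : ℕ} (hk : k < N) :
    ∃ z ∈ pIntegers p, coeff k f = coeff k g + p * z := by
  obtain ⟨x, hx, rfl⟩ := h
  refine ⟨coeff k x, hx k hk, ?_⟩
  rw [map_add, ← map_natCast (C (R := ℚ)), coeff_C_mul]

end Integrality

section Exponential

open PowerSeries

/-- The series `(e^X - 1) / X`. -/
noncomputable def expQuotient : ℚ⟦X⟧ := mk fun k => ((k + 1).factorial : ℚ)⁻¹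

/-- The series `∑_{k ≥ 2} B_k X ^ k / (k * k!)`. -/
noncomputable def bernoulliLog : ℚ⟦X⟧ :=
  mk fun k => if k < 2 then 0 else bernoulli k / (k * k.factorial)

/-- Substitution of `e^X` in an integral polynomial. -/
noncomputable def evalExp : Polynomial ℤ →ₐ[ℤ] ℚ⟦X⟧ := Polynomial.aeval (exp ℚ)

lemma evalExp_X : evalExp Polynomial.X = exp ℚ := Polynomial.aeval_X _

lemma X_mul_expQuotient : X * expQuotient = exp ℚ - 1 := by
  ext (_ | k)
  · simp
  · simp [expQuotient, coeff_succ_X_mul, coeff_exp, coeff_one]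

lemma bernoulliPowerSeries_mul_expQuotient : bernoulliPowerSeries ℚ * expQuotient = 1 := by
  refine mul_left_cancel₀ (X_ne_zero (R := ℚ)) ?_
  linear_combination bernoulliPowerSeries_mul_exp_sub_one ℚ +
    bernoulliPowerSeries ℚ * X_mul_expQuotient

lemma constantCoeff_expQuotient : constantCoeff expQuotient = 1 := by
  rw [← coeff_zero_eq_constantCoeff_apply, expQuotient, coeff_mk]
  simp

lemma X_mul_derivative_bernoulliLog :
    X * d⁄dX ℚ bernoulliLog = bernoulliPowerSeries ℚ - 1 + C (1 / 2) * X := by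
  ext (_ | _ | k)
  · simp [bernoulliPowerSeries]
  · simp [bernoulliPowerSeries, bernoulliLog, coeff_succ_X_mul, coeff_derivative, coeff_one]
    norm_num
  · simp [bernoulliPowerSeries, bernoulliLog, coeff_succ_X_mul, coeff_derivative, coeff_one]
    field_simp

lemma X_mul_derivative_bernoulliPowerSeries :
    X * d⁄dX ℚ (bernoulliPowerSeries ℚ) = bernoulliPowerSeries ℚ -
      bernoulliPowerSeries ℚ ^ 2 - X * bernoulliPowerSeries ℚ := by
  have h := bernoulliPowerSeries_mul_exp_sub_one ℚ
  have h' := congrArg (d⁄dX ℚ) h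
  rw [Derivation.leibniz, map_sub, derivative_exp, derivative_one, derivative_X] at h'
  simp only [smul_eq_mul, sub_zero] at h'
  linear_combination bernoulliPowerSeries ℚ * h' -
    (d⁄dX ℚ (bernoulliPowerSeries ℚ) + bernoulliPowerSeries ℚ) * h

lemma bernoulliPowerSeries_mul_derivative_bernoulliLog :
    bernoulliPowerSeries ℚ * d⁄dX ℚ bernoulliLog =
      -(d⁄dX ℚ (bernoulliPowerSeries ℚ) + C (1 / 2) * bernoulliPowerSeries ℚ) := by
  refine mul_left_cancel₀ (X_ne_zero (R := ℚ)) ?_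
  have h2 : (C (1 / 2) : ℚ⟦X⟧) * 2 = 1 := by
    rw [← map_ofNat (C (R := ℚ)), ← map_mul]; norm_num
  linear_combination bernoulliPowerSeries ℚ * X_mul_derivative_bernoulliLog +
    X_mul_derivative_bernoulliPowerSeries + X * bernoulliPowerSeries ℚ * h2

variable {p : ℕ} [hp : Fact p.Prime]

lemma rescale_exp_mem_pIntegralSeries (c : ℤ) :
    rescale (c : ℚ) (exp ℚ) ∈ pIntegralSeries p p := fun k hk => by
  rw [coeff_rescale, coeff_exp, one_div]
  exact mul_mem (pow_mem (intCast_mem _ _) _) (inv_factorial_mem_pIntegers hk)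

lemma exp_mem_pIntegralSeries : exp ℚ ∈ pIntegralSeries p p := fun k hk => by
  rw [coeff_exp, one_div]
  exact inv_factorial_mem_pIntegers hk

lemma evalExp_mem_pIntegralSeries (f : Polynomial ℤ) : evalExp f ∈ pIntegralSeries p p := by
  rw [evalExp, Polynomial.aeval_eq_sum_range]
  exact sum_mem fun i _ => zsmul_mem (pow_mem exp_mem_pIntegralSeries _) _

lemma constantCoeff_evalExp (f : Polynomial ℤ) :
    constantCoeff (evalExp f) = (f.eval 1 : ℤ) := by
  rw [evalExp, Polynomial.aeval_eq_sum_range, Polynomial.eval_eq_sum_range, map_sum]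
  simp [constantCoeff_exp]

lemma expQuotient_mem_pIntegralSeries : expQuotient ∈ pIntegralSeries p (p - 1) := fun k hk => by
  rw [expQuotient, coeff_mk]
  exact inv_factorial_mem_pIntegers (by omega)

lemma bernoulliPowerSeries_mem_pIntegralSeries :
    bernoulliPowerSeries ℚ ∈ pIntegralSeries p (p - 1) :=
  mem_pIntegralSeries_of_mul_eq_one expQuotient_mem_pIntegralSeries constantCoeff_expQuotient
    ((mul_comm _ _).trans bernoulliPowerSeries_mul_expQuotient)

lemma bernoulliLog_mem_pIntegralSeries : bernoulliLog ∈ pIntegralSeries p (p - 1) := fun k hk => by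
  rw [bernoulliLog, coeff_mk]
  split_ifs with h
  · exact zero_mem _
  · have hB := bernoulliPowerSeries_mem_pIntegralSeries (p := p) k hk
    have hk' := inv_natCast_mem_pIntegers (p := p) (k := k)
      fun hd => (Nat.le_of_dvd (by omega) hd).not_gt (by omega)
    have := mul_mem hB hk'
    rw [bernoulliPowerSeries, coeff_mk] at this
    convert this using 1
    simp
    field_simp

lemma exists_exp_pow_sub_one_eq :
    ∃ g ∈ pIntegralSeries p (p - 1), exp ℚ ^ p - 1 = (p : ℚ⟦X⟧) * X * (1 + (p : ℚ⟦X⟧) * g) := by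
  refine ⟨mk fun k => if k = 0 then 0 else (p : ℚ) ^ (k - 1) * ((k + 1).factorial : ℚ)⁻¹,
    fun k hk => ?_, ?_⟩
  · rw [coeff_mk]
    split_ifs
    · exact zero_mem _
    · exact mul_mem (pow_mem (natCast_mem _ _) _) (inv_factorial_mem_pIntegers (by omega))
  · rw [exp_pow_eq_rescale_exp, ← map_natCast (C (R := ℚ)), mul_comm _ X, mul_assoc]
    ext (_ | _ | k)
    · rw [map_sub, coeff_rescale, coeff_exp, coeff_zero_X_mul]
      simp
    · rw [coeff_succ_X_mul, coeff_C_mul, map_add, coeff_C_mul, map_sub, coeff_rescale, coeff_exp]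
      simp [coeff_one]
    · rw [coeff_succ_X_mul, coeff_C_mul, map_add, coeff_C_mul, map_sub, coeff_rescale, coeff_exp]
      simp [coeff_one]
      ring

end Exponential

section FleckUnit

open PowerSeries

lemma evalExp_pow_eq {p : ℕ} {u v w : Polynomial ℤ} {g : ℚ⟦X⟧}
    (hg : exp ℚ ^ p - 1 = (p : ℚ⟦X⟧) * X * (1 + (p : ℚ⟦X⟧) * g))
    (hv : u ^ p = 1 + (p : Polynomial ℤ) * v - (Polynomial.X ^ p - 1) * w ^ p) :
    evalExp u ^ p = 1 + (p : ℚ⟦X⟧) * (evalExp v - X * (1 + (p : ℚ⟦X⟧) * g) * evalExp w ^ p) := by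
  have hv' := congrArg evalExp hv
  simp only [map_add, map_one, map_mul, map_sub, map_pow, map_natCast, evalExp_X] at hv'
  linear_combination hv' - evalExp w ^ p * hg

variable {p : ℕ} [hp : Fact p.Prime] {u v w : Polynomial ℤ}

lemma natCast_prime_ne_zero : (p : ℚ⟦X⟧) ≠ 0 := by
  rw [← map_natCast (C (R := ℚ)), Ne, map_eq_zero_iff _ C_injective]
  exact_mod_cast hp.out.ne_zero

lemma one_sub_exp_pow (i : ℕ) : (1 - exp ℚ) ^ i = X ^ i * (-expQuotient) ^ i := by
  rw [← mul_pow]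
  congr 1
  linear_combination X_mul_expQuotient

lemma X_pow_mul_eq_natCast_sq_mul (f : ℚ⟦X⟧) (N : ℕ) :
    X ^ N * f = (p : ℚ⟦X⟧) ^ 2 * (X ^ N * (C ((p : ℚ) ^ 2)⁻¹ * f)) := by
  have h : (p : ℚ⟦X⟧) ^ 2 * C ((p : ℚ) ^ 2)⁻¹ = 1 := by
    have hp0 : (p : ℚ) ≠ 0 := by exact_mod_cast hp.out.ne_zero
    rw [← map_natCast (C (R := ℚ)), ← map_pow, ← map_mul, mul_inv_cancel₀ (pow_ne_zero _ hp0),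
      map_one]
  linear_combination -(X ^ N * f) * h

lemma seriesCong_evalExp_bernoulliPowerSeries
    (hu : ∑ i ∈ range p, Polynomial.X ^ i - (1 - Polynomial.X) ^ (p - 1) =
      (p : Polynomial ℤ) * u) :
    SeriesCong p (p - 1) (evalExp u) (bernoulliPowerSeries ℚ) := by
  obtain ⟨g, hg, hgeq⟩ := exists_exp_pow_sub_one_eq (p := p)
  have hu' := congrArg evalExp hu
  have hN := congrArg evalExp (one_sub_X_mul_geom_sum p)
  simp only [map_sub, map_mul, map_one, map_pow, map_natCast, evalExp_X] at hu' hN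
  set T := evalExp (∑ i ∈ range p, Polynomial.X ^ i)
  set U := evalExp u
  set B := bernoulliPowerSeries ℚ
  have hT : T = p * B * (1 + (p : ℚ⟦X⟧) * g) := by
    refine mul_left_cancel₀ (X_ne_zero (R := ℚ)) ?_
    linear_combination -B * hN + B * hgeq - T * bernoulliPowerSeries_mul_exp_sub_one ℚ
  rw [one_sub_exp_pow, X_pow_mul_eq_natCast_sq_mul (p := p)] at hu'
  set K := X ^ (p - 1) * (C ((p : ℚ) ^ 2)⁻¹ * (-expQuotient) ^ (p - 1)) with hK
  refine ⟨B * g - K, sub_mem (mul_mem bernoulliPowerSeries_mem_pIntegralSeries hg)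
    (X_pow_mul_mem_pIntegralSeries _), mul_left_cancel₀ (natCast_prime_ne_zero (p := p)) ?_⟩
  linear_combination -hu' + hT

/-- Congruence of two series follows from that of their derivatives and constant terms. -/
lemma seriesCong_of_derivative {N : ℕ} (hN : N < p) {f g h : ℚ⟦X⟧} {c : ℚ} (hc : c ∈ pIntegers p)
    (h0 : constantCoeff f = constantCoeff g + p * c) (hh : h ∈ pIntegralSeries p N)
    (hd : d⁄dX ℚ f = d⁄dX ℚ g + p * h) : SeriesCong p (N + 1) f g := by
  have hp0 : (p : ℚ) ≠ 0 := by exact_mod_cast hp.out.ne_zero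
  have hpC : (p : ℚ⟦X⟧) * C (p : ℚ)⁻¹ = 1 := by
    rw [← map_natCast (C (R := ℚ)), ← map_mul, mul_inv_cancel₀ hp0, map_one]
  refine ⟨C (p : ℚ)⁻¹ * (f - g), mem_pIntegralSeries_of_derivative hN ?_ ?_, ?_⟩
  · rw [map_mul, map_sub, h0, constantCoeff_C, add_sub_cancel_left, inv_mul_cancel_left₀ hp0]
    exact hc
  · rw [Derivation.leibniz, derivative_C, smul_zero, add_zero, smul_eq_mul, map_sub, hd]
    convert hh using 1
    linear_combination h * hpC
  · linear_combination -(f - g) * hpC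

lemma half_mem_pIntegers (hodd : Odd p) : (1 / 2 : ℚ) ∈ pIntegers p := by
  rw [one_div]
  refine inv_natCast_mem_pIntegers (p := p) (k := 2) fun h => ?_
  have := (Nat.prime_dvd_prime_iff_eq hp.out Nat.prime_two).mp h
  subst this
  exact absurd hodd (by decide)

lemma seriesCong_evalExp_pow (hodd : Odd p)
    (hu : ∑ i ∈ range p, Polynomial.X ^ i - (1 - Polynomial.X) ^ (p - 1) =
      (p : Polynomial ℤ) * u) (hw : u = 1 + (1 - Polynomial.X) * w) :
    SeriesCong p (p - 1) (evalExp w ^ p) (C (1 / 2)) := by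
  have h2 := hp.out.two_le
  have h3 : 3 ≤ p := by
    rcases hodd with ⟨k, rfl⟩
    omega
  obtain ⟨h, hh, hUB⟩ := seriesCong_evalExp_bernoulliPowerSeries hu
  have hw' := congrArg evalExp hw
  simp only [map_add, map_one, map_mul, map_sub, evalExp_X] at hw'
  have hw1 : ((w.eval 1 : ℤ) : ℚ) = 1 / 2 - p * coeff 1 h := by
    have h1 := congrArg (coeff 1) hw'
    have h4 : (1 : ℚ⟦X⟧) - exp ℚ = X * -expQuotient := by simpa using one_sub_exp_pow 1
    rw [hUB, h4, mul_assoc, ← map_natCast (C (R := ℚ)), map_add, map_add, coeff_C_mul,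
      show (1 : ℕ) = 0 + 1 from rfl, coeff_succ_X_mul, coeff_zero_eq_constantCoeff_apply, map_mul,
      map_neg, constantCoeff_expQuotient, constantCoeff_evalExp] at h1
    simp [bernoulliPowerSeries, coeff_one] at h1
    linarith
  obtain ⟨q, hq⟩ : (p : ℤ) ∣ w.eval 1 ^ p - w.eval 1 := by
    rw [← ZMod.intCast_zmod_eq_zero_iff_dvd]
    push_cast
    rw [ZMod.pow_card, sub_self]
  have hq' : ((w.eval 1 : ℤ) : ℚ) ^ p - w.eval 1 = p * q := by exact_mod_cast hq
  have hW := evalExp_mem_pIntegralSeries (p := p) w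
  obtain ⟨N, hN⟩ : ∃ N, p - 1 = N + 1 := ⟨p - 2, by omega⟩
  rw [hN] at hh ⊢
  refine seriesCong_of_derivative (by omega) (c := q - coeff 1 h)
    (h := evalExp w ^ (p - 1) * d⁄dX ℚ (evalExp w))
    (sub_mem (intCast_mem _ _) (hh 1 (by omega))) ?_ ?_ ?_
  · rw [map_pow, constantCoeff_evalExp, constantCoeff_C]
    linear_combination hq' + hw1
  · exact mul_mem (pow_mem (mem_pIntegralSeries_of_le (by omega) hW) _)
      (derivative_mem_pIntegralSeries (mem_pIntegralSeries_of_le (by omega) hW))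
  · rw [derivative_pow, derivative_C]
    ring

lemma seriesCong_bernoulliPowerSeries_pow
    (hu : ∑ i ∈ range p, Polynomial.X ^ i - (1 - Polynomial.X) ^ (p - 1) =
      (p : Polynomial ℤ) * u)
    (hv : u ^ p = 1 + (p : Polynomial ℤ) * v - (Polynomial.X ^ p - 1) * w ^ p) :
    SeriesCong p (p - 1) (bernoulliPowerSeries ℚ ^ p) 1 := by
  obtain ⟨g, hg, hgeq⟩ := exists_exp_pow_sub_one_eq (p := p)
  have hmem : ∀ f, evalExp f ∈ pIntegralSeries p (p - 1) := fun f =>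
    mem_pIntegralSeries_of_le (Nat.sub_le _ _) (evalExp_mem_pIntegralSeries f)
  refine ((seriesCong_evalExp_bernoulliPowerSeries hu).pow (hmem u)
    bernoulliPowerSeries_mem_pIntegralSeries p).symm.trans ⟨_, ?_, evalExp_pow_eq hgeq hv⟩
  exact sub_mem (hmem v) (mul_mem (mul_mem X_mem_pIntegralSeries
    (add_mem (one_mem _) (mul_mem (natCast_mem _ _) hg))) (pow_mem (hmem w) _))

/-- If `u ^ p = 1 + p v` modulo `X ^ p - 1`, then `v` becomes minus the logarithm series
`∑_{k ≥ 2} B_k X ^ k / (k * k!)` after substitution of `e^X`. -/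
lemma seriesCong_evalExp_bernoulliLog (hodd : Odd p)
    (hu : ∑ i ∈ range p, Polynomial.X ^ i - (1 - Polynomial.X) ^ (p - 1) =
      (p : Polynomial ℤ) * u) (hw : u = 1 + (1 - Polynomial.X) * w)
    (hv : u ^ p = 1 + (p : Polynomial ℤ) * v - (Polynomial.X ^ p - 1) * w ^ p)
    (hv1 : v.eval 1 = 0) :
    SeriesCong p (p - 1) (evalExp v) (-bernoulliLog) := by
  have h3 : 3 ≤ p := by
    have := hp.out.two_le
    rcases hodd with ⟨k, rfl⟩
    omega
  obtain ⟨g, hg, hgeq⟩ := exists_exp_pow_sub_one_eq (p := p)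
  obtain ⟨h, hh, hUB⟩ := seriesCong_evalExp_bernoulliPowerSeries hu
  obtain ⟨k, hk, hWk⟩ := seriesCong_evalExp_pow hodd hu hw
  have hUp := evalExp_pow_eq hgeq hv
  have hUmul : evalExp u * evalExp u ^ (p - 1) = evalExp u ^ p := mul_pow_sub_one hp.out.ne_zero _
  have hmem : ∀ f, evalExp f ∈ pIntegralSeries p (p - 1) := fun f =>
    mem_pIntegralSeries_of_le (Nat.sub_le _ _) (evalExp_mem_pIntegralSeries f)
  have hUm := hmem u
  have hVm := hmem v
  have hWm := hmem w
  set U := evalExp u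
  set V := evalExp v with hVdef
  set W := evalExp w
  set B := bernoulliPowerSeries ℚ with hB
  obtain ⟨N, hN⟩ : ∃ N, p - 1 = N + 1 := ⟨p - 2, by omega⟩
  have hdU := congrArg (d⁄dX ℚ) hUp
  have hdp : d⁄dX ℚ (p : ℚ⟦X⟧) = 0 := by rw [← map_natCast (C (R := ℚ)), derivative_C]
  simp only [derivative_pow, map_add, map_sub, Derivation.leibniz, derivative_one, hdp,
    smul_eq_mul, derivative_X] at hdU
  have hdU' : U ^ (p - 1) * d⁄dX ℚ U = d⁄dX ℚ V - (1 + (p : ℚ⟦X⟧) * g) * W ^ p -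
      (p : ℚ⟦X⟧) * (X * (d⁄dX ℚ g * W ^ p + (1 + (p : ℚ⟦X⟧) * g) * (W ^ (p - 1) * d⁄dX ℚ W))) := by
    refine mul_left_cancel₀ (natCast_prime_ne_zero (p := p)) ?_
    linear_combination hdU
  have hdUB := congrArg (d⁄dX ℚ) hUB
  simp only [map_add, Derivation.leibniz, hdp, smul_eq_mul, mul_zero, add_zero] at hdUB
  have hBε := bernoulliPowerSeries_mul_expQuotient
  have hBL := bernoulliPowerSeries_mul_derivative_bernoulliLog
  rw [← hB] at hBε hBL
  have hBm : B ∈ pIntegralSeries p (p - 1) := bernoulliPowerSeries_mem_pIntegralSeries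
  have hεm : expQuotient ∈ pIntegralSeries p (p - 1) := expQuotient_mem_pIntegralSeries
  have hlow : ∀ {f : ℚ⟦X⟧}, f ∈ pIntegralSeries p (p - 1) → f ∈ pIntegralSeries p N :=
    fun hf => mem_pIntegralSeries_of_le (by omega) hf
  have hder : ∀ {f : ℚ⟦X⟧}, f ∈ pIntegralSeries p (p - 1) → d⁄dX ℚ f ∈ pIntegralSeries p N :=
    fun hf => derivative_mem_pIntegralSeries (hN ▸ hf)
  have hpm : (1 + (p : ℚ⟦X⟧) * g) ∈ pIntegralSeries p N :=
    add_mem (one_mem _) (mul_mem (natCast_mem _ _) (hlow hg))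
  rw [hN]
  refine seriesCong_of_derivative (by omega) (c := 0) (h := expQuotient *
    (-h * d⁄dX ℚ V + d⁄dX ℚ h + (V - X * (1 + (p : ℚ⟦X⟧) * g) * W ^ p) * d⁄dX ℚ U + U * g * W ^ p +
      C (1 / 2) * h + U * k +
      U * (X * (d⁄dX ℚ g * W ^ p + (1 + (p : ℚ⟦X⟧) * g) * (W ^ (p - 1) * d⁄dX ℚ W))))) (zero_mem _) ?_ ?_ ?_
  · rw [hVdef, constantCoeff_evalExp, hv1, map_neg, ← coeff_zero_eq_constantCoeff_apply,
      bernoulliLog, coeff_mk]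
    simp
  · refine mul_mem (hlow hεm) (add_mem (add_mem (add_mem (add_mem (add_mem (add_mem ?_ (hder hh))
      ?_) ?_) ?_) ?_) ?_)
    · exact mul_mem (neg_mem (hlow hh)) (hder hVm)
    · exact mul_mem (sub_mem (hlow hVm) (mul_mem (mul_mem X_mem_pIntegralSeries hpm)
        (pow_mem (hlow hWm) _))) (hder hUm)
    · exact mul_mem (mul_mem (hlow hUm) (hlow hg)) (pow_mem (hlow hWm) _)
    · exact mul_mem (C_mem_pIntegralSeries (half_mem_pIntegers hodd)) (hlow hh)
    · exact mul_mem (hlow hUm) (hlow hk)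
    · exact mul_mem (hlow hUm) (mul_mem X_mem_pIntegralSeries (add_mem
        (mul_mem (hder hg) (pow_mem (hlow hWm) _))
        (mul_mem hpm (mul_mem (pow_mem (hlow hWm) _) (hder hWm)))))
  · rw [map_neg]
    have key : B * (d⁄dX ℚ V + d⁄dX ℚ bernoulliLog) = (p : ℚ⟦X⟧) *
        (-h * d⁄dX ℚ V + d⁄dX ℚ h + (V - X * (1 + (p : ℚ⟦X⟧) * g) * W ^ p) * d⁄dX ℚ U + U * g * W ^ p +
          C (1 / 2) * h + U * k +
          U * (X * (d⁄dX ℚ g * W ^ p + (1 + (p : ℚ⟦X⟧) * g) * (W ^ (p - 1) * d⁄dX ℚ W)))) := by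
      linear_combination hBL - U * hdU' + d⁄dX ℚ U * hUmul + d⁄dX ℚ U * hUp + hdUB + U * hWk -
        (d⁄dX ℚ V - C (1 / 2)) * hUB
    linear_combination expQuotient * key -
      (d⁄dX ℚ V + d⁄dX ℚ bernoulliLog) * hBε

end FleckUnit

section Extraction

open PowerSeries

variable {p : ℕ} [hp : Fact p.Prime]

lemma exists_indicator_eq (x : ℤ) : ∃ z ∈ pIntegers p,
    (if x % p = 0 then 1 else 0 : ℚ) = 1 + (x : ℚ) ^ (p - 1) / (p - 1).factorial + p * z := by
  have h1 : p - 1 ≠ 0 := Nat.sub_ne_zero_of_lt hp.out.one_lt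
  have hf : ((p - 1).factorial : ℚ) ≠ 0 := by positivity
  have hinv := inv_factorial_mem_pIntegers (p := p) (Nat.sub_lt hp.out.pos one_pos)
  have key : (p : ℤ) ∣ (if x % p = 0 then 1 else 0) * ((p - 1).factorial : ℤ)
      - (p - 1).factorial - x ^ (p - 1) := by
    rw [← ZMod.intCast_zmod_eq_zero_iff_dvd]
    push_cast
    rw [ZMod.wilsons_lemma]
    split_ifs with h
    · have : (x : ZMod p) = 0 := (ZMod.intCast_zmod_eq_zero_iff_dvd x p).mpr (Int.dvd_of_emod_eq_zero h)
      simp [this, h1]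
    · have : (x : ZMod p) ≠ 0 := fun h0 =>
        h (Int.emod_eq_zero_of_dvd ((ZMod.intCast_zmod_eq_zero_iff_dvd x p).mp h0))
      rw [ZMod.pow_card_sub_one_eq_one this]
      simp
  obtain ⟨q, hq⟩ := key
  refine ⟨q * ((p - 1).factorial : ℚ)⁻¹, mul_mem (intCast_mem _ _) hinv, ?_⟩
  have hq' := congrArg (Int.cast : ℤ → ℚ) hq
  push_cast at hq'
  field_simp
  linear_combination hq'

/-- Modulo `p`, the sum of the coefficients in a residue class can be read off from `f (exp X)`. -/
lemma exists_residueSum_eq (r : ℤ) (f : Polynomial ℤ) : ∃ z ∈ pIntegers p,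
    (residueSum p r f : ℚ) = coeff 0 (rescale (-(r : ℚ)) (exp ℚ) * evalExp f) +
      coeff (p - 1) (rescale (-(r : ℚ)) (exp ℚ) * evalExp f) + p * z := by
  induction f using Polynomial.induction_on' with
  | add f g hf hg =>
    obtain ⟨x, hx, hfx⟩ := hf
    obtain ⟨y, hy, hgy⟩ := hg
    refine ⟨x + y, add_mem hx hy, ?_⟩
    simp only [map_add, mul_add, Int.cast_add]
    linear_combination hfx + hgy
  | monomial k c =>
    obtain ⟨z, hz, h⟩ := exists_indicator_eq (p := p) ((k : ℤ) - r)
    have he : rescale (-(r : ℚ)) (exp ℚ) * evalExp (Polynomial.monomial k c) =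
        C (c : ℚ) * rescale ((((k : ℤ) - r : ℤ) : ℚ)) (exp ℚ) := by
      rw [← Polynomial.C_mul_X_pow_eq_monomial, map_mul, map_pow, evalExp_X,
        exp_pow_eq_rescale_exp, eq_intCast, map_intCast, map_intCast, mul_left_comm,
        exp_mul_exp_eq_exp_add]
      congr 3
      push_cast
      ring
    refine ⟨c * z, mul_mem (intCast_mem _ _) hz, ?_⟩
    rw [he, coeff_C_mul, coeff_C_mul, coeff_rescale, coeff_rescale, coeff_exp, coeff_exp,
      residueSum_monomial]
    simp only [apply_ite (Int.cast : ℤ → ℚ), Int.cast_zero]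
    have : (if ((k : ℤ) - r) % p = 0 then (c : ℚ) else 0) =
        c * (if ((k : ℤ) - r) % p = 0 then 1 else 0) := by simp
    rw [this, h]
    simp
    ring

end Extraction

section Coefficients

open PowerSeries

lemma coeff_bernoulliPowerSeries_pow (μ k : ℕ) :
    coeff k (bernoulliPowerSeries ℚ ^ μ) = bernHigher μ k / k.factorial := by
  have hk : (k.factorial : ℚ) ≠ 0 := by positivity
  have hpow : bernoulliPowerSeries ℚ ^ μ = ∏ _j : Fin μ, bernoulliPowerSeries ℚ := by simp
  rw [hpow, coeff_prod, bernHigher, mul_div_cancel_left₀ _ hk]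
  refine sum_equiv Finsupp.equivFunOnFinite (fun l => ?_) fun l _ => ?_
  · simp [mem_finsuppAntidiag, Nat.mem_antidiagonalTuple]
  · simp [bernoulliPowerSeries]

lemma coeff_rescale_exp_mul_bernoulliPowerSeries_pow (μ k : ℕ) (t : ℚ) :
    coeff k (rescale t (exp ℚ) * bernoulliPowerSeries ℚ ^ μ) =
      bernHigherPoly μ k t / k.factorial := by
  rw [mul_comm, coeff_mul, Nat.sum_antidiagonal_eq_sum_range_succ_mk, bernHigherPoly, sum_div]
  refine sum_congr rfl fun j hj => ?_
  have hjk : j ≤ k := by simpa [Nat.lt_succ_iff] using hj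
  rw [coeff_bernoulliPowerSeries_pow, coeff_rescale, coeff_exp, Nat.cast_choose ℚ hjk]
  have h1 : (k.factorial : ℚ) ≠ 0 := by positivity
  simp
  field_simp

lemma coeff_bernoulliLog_mul (μ b : ℕ) (t : ℚ) :
    coeff b (bernoulliLog * (rescale t (exp ℚ) * bernoulliPowerSeries ℚ ^ μ)) =
      1 / (b.factorial : ℚ) * ∑ k ∈ Icc 2 b,
        (b.choose k : ℚ) * (bernoulli k / (k : ℚ)) * bernHigherPoly μ (b - k) t := by
  have hsub : Icc 2 b ⊆ range b.succ := fun k hk => by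
    simp only [mem_Icc] at hk
    simp only [mem_range]
    omega
  rw [coeff_mul, Nat.sum_antidiagonal_eq_sum_range_succ_mk, mul_sum]
  symm
  apply sum_subset_zero_on_sdiff hsub
  · intro k hk
    have : k < 2 := by
      simp only [mem_sdiff, mem_range, mem_Icc] at hk
      omega
    rw [bernoulliLog, coeff_mk, if_pos this, zero_mul]
  · intro k hk
    simp only [mem_Icc] at hk
    rw [coeff_rescale_exp_mul_bernoulliPowerSeries_pow, bernoulliLog, coeff_mk,
      if_neg (by omega), Nat.cast_choose ℚ hk.2]
    have h1 : (b.factorial : ℚ) ≠ 0 := by positivity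
    have h2 : (k : ℚ) ≠ 0 := by
      have : k ≠ 0 := by omega
      exact_mod_cast this
    field_simp

end Coefficients

section Main

open PowerSeries

lemma map_pow_prime_mul {p : ℕ} {u v w : Polynomial ℤ} {A : Type*} [CommRing A]
    (φ : Polynomial ℤ →+* A) (hφ : φ (Polynomial.X ^ p - 1) = 0)
    (hv : u ^ p = 1 + (p : Polynomial ℤ) * v - (Polynomial.X ^ p - 1) * w ^ p) (s : ℕ) :
    φ (u ^ (p * s)) = φ ((1 + (p : Polynomial ℤ) * v) ^ s) := by
  rw [pow_mul, hv, map_pow, map_sub, map_mul, hφ, zero_mul, sub_zero, map_pow]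

variable {p : ℕ} [hp : Fact p.Prime] {u v w : Polynomial ℤ}

lemma exists_residueSum_mul_eq (hodd : Odd p)
    (hu : ∑ i ∈ range p, Polynomial.X ^ i - (1 - Polynomial.X) ^ (p - 1) =
      (p : Polynomial ℤ) * u) (hw : u = 1 + (1 - Polynomial.X) * w)
    (hv : u ^ p = 1 + (p : Polynomial ℤ) * v - (Polynomial.X ^ p - 1) * w ^ p)
    {i j b μ : ℕ} (hi : i ≠ 0) (hib : i + b = p - 1) (hj : j ≡ μ + i [MOD p]) (r : ℤ) :
    ∃ z ∈ pIntegers p, (residueSum p r (v * (u ^ j * (1 - Polynomial.X) ^ i)) : ℚ) =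
      -((-1) ^ b * coeff b (bernoulliLog *
        (rescale (-(r : ℚ)) (exp ℚ) * bernoulliPowerSeries ℚ ^ μ))) + p * z := by
  have hv1 : v.eval 1 = 0 := by
    have h := congrArg (Polynomial.eval 1) hv
    simpa [eval_one_of_geom_sum_sub_eq hp.out hu, hp.out.ne_zero] using h
  have hmem : ∀ f, evalExp f ∈ pIntegralSeries p (p - 1) := fun f =>
    mem_pIntegralSeries_of_le (Nat.sub_le _ _) (evalExp_mem_pIntegralSeries f)
  have hR : rescale (-(r : ℚ)) (exp ℚ) ∈ pIntegralSeries p (p - 1) := by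
    have := rescale_exp_mem_pIntegralSeries (p := p) (-r)
    rw [Int.cast_neg] at this
    exact mem_pIntegralSeries_of_le (Nat.sub_le _ _) this
  have hB := bernoulliPowerSeries_mem_pIntegralSeries (p := p)
  have hE := expQuotient_mem_pIntegralSeries (p := p)
  have hL := bernoulliLog_mem_pIntegralSeries (p := p)
  have hUB : SeriesCong p (p - 1) (evalExp u ^ j * expQuotient ^ i)
      (bernoulliPowerSeries ℚ ^ μ) := by
    have h1 := ((seriesCong_evalExp_bernoulliPowerSeries hu).pow (hmem u) hB j).trans
      ((seriesCong_bernoulliPowerSeries_pow hu hv).pow_of_modEq hB hj)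
    have h2 := h1.mul (SeriesCong.refl (expQuotient ^ i)) (pow_mem hE i) (pow_mem hB _)
    rwa [pow_add, mul_assoc, ← mul_pow, bernoulliPowerSeries_mul_expQuotient, one_pow,
      mul_one] at h2
  have hV := (seriesCong_evalExp_bernoulliLog hodd hu hw hv hv1).mul hUB
    (mul_mem (pow_mem (hmem u) j) (pow_mem hE i)) (neg_mem hL)
  have hRV := (SeriesCong.refl (rescale (-(r : ℚ)) (exp ℚ))).mul hV
    (mul_mem (hmem v) (mul_mem (pow_mem (hmem u) j) (pow_mem hE i))) hR
  obtain ⟨x, hx, hxeq⟩ := exists_coeff_eq_of_SeriesCong hRV (k := b) (by omega)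
  obtain ⟨y, hy, hyeq⟩ :=
    exists_residueSum_eq (p := p) r (v * (u ^ j * (1 - Polynomial.X) ^ i))
  have hsign : (-1 : ℚ) ^ i = (-1) ^ b := by
    have he : Even (i + b) := hib ▸ hodd.tsub_odd odd_one
    rw [Nat.even_add] at he
    rcases Nat.even_or_odd i with h | h
    · rw [h.neg_one_pow, (he.mp h).neg_one_pow]
    · have hb : Odd b := Nat.not_even_iff_odd.mp (mt he.mpr (Nat.not_even_iff_odd.mpr h))
      rw [h.neg_one_pow, hb.neg_one_pow]
  have hser : rescale (-(r : ℚ)) (exp ℚ) * evalExp (v * (u ^ j * (1 - Polynomial.X) ^ i)) =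
      X ^ i * (C ((-1) ^ b) *
        (rescale (-(r : ℚ)) (exp ℚ) * (evalExp v * (evalExp u ^ j * expQuotient ^ i)))) := by
    rw [← hsign]
    simp only [map_mul, map_pow, map_sub, map_neg, map_one, evalExp_X, one_sub_exp_pow]
    rw [neg_pow]
    ring
  refine ⟨y + (-1) ^ b * x, add_mem hy (mul_mem (pow_mem (neg_mem (one_mem _)) _) hx), ?_⟩
  rw [hyeq, hser, coeff_X_pow_mul', if_neg (by omega), coeff_X_pow_mul', if_pos (by omega),
    show p - 1 - i = b by omega, coeff_C_mul, hxeq]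
  have hcomm : rescale (-(r : ℚ)) (exp ℚ) * (-bernoulliLog * bernoulliPowerSeries ℚ ^ μ) =
      -(bernoulliLog * (rescale (-(r : ℚ)) (exp ℚ) * bernoulliPowerSeries ℚ ^ μ)) := by ring
  rw [hcomm, map_neg]
  ring

/-- The difference quotient of the Fleck quotients at a nonzero index, when `p` is odd. -/
lemma modCong_Fp_sub_div (hodd : Odd p) {i j b μ s : ℕ} (hi : i ≠ 0) (hib : i + b = p - 1)
    (hj : j ≡ μ + i [MOD p]) (hs : s ≠ 0) (r : ℤ) :
    modCong p 1 ((Fp p (i + (p - 1) * (j + p * s)) r - Fp p (i + (p - 1) * j) r) /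
        (((p : ℚ) - 1) * (p * s)))
      ((-1) ^ b * coeff b (bernoulliLog *
        (rescale (-(r : ℚ)) (exp ℚ) * bernoulliPowerSeries ℚ ^ μ))) := by
  obtain ⟨u, hu⟩ := exists_geom_sum_sub_eq p
  obtain ⟨w, hw⟩ := exists_eq_one_add_of_eval_one (eval_one_of_geom_sum_sub_eq hp.out hu)
  rw [map_one] at hw
  obtain ⟨v, hv⟩ := exists_pow_prime_eq hu hw
  obtain ⟨x, hx, hxeq⟩ := exists_residueSum_mul_eq hodd hu hw hv hi hib hj r
  set K := (-1) ^ b * coeff b (bernoulliLog *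
    (rescale (-(r : ℚ)) (exp ℚ) * bernoulliPowerSeries ℚ ^ μ))
  obtain ⟨e, t, ht, rfl⟩ := Nat.exists_eq_pow_mul_and_not_dvd hs p hp.out.ne_one
  obtain ⟨z, hz⟩ := exists_one_add_pow hodd v e t
  have hdiff : residueSum p r (u ^ (j + p * (p ^ e * t)) * (1 - Polynomial.X) ^ i) =
      residueSum p r (u ^ j * (1 - Polynomial.X) ^ i) +
      ((p ^ (e + 1) * t : ℕ) * residueSum p r (v * (u ^ j * (1 - Polynomial.X) ^ i)) +
      (p ^ (e + 2) : ℕ) * residueSum p r (z * (u ^ j * (1 - Polynomial.X) ^ i))) := by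
    rw [← residueSum_natCast_mul, ← residueSum_natCast_mul, ← map_add, ← map_add]
    refine residueSum_congr r ?_
    rw [pow_add, map_mul, map_mul, map_pow_prime_mul _ AdjoinRoot.mk_self hv, hz, ← map_mul,
      ← map_mul]
    congr 1
    push_cast
    ring
  have h2 := hp.out.two_le
  have hp0 : (p : ℚ) ≠ 0 := by exact_mod_cast hp.out.ne_zero
  have ht0 : (t : ℚ) ≠ 0 := by
    rintro h
    exact ht (by rw [Nat.cast_eq_zero.mp h]; exact dvd_zero p)
  have hp1 : ((p - 1 : ℕ) : ℚ) = p - 1 := by rw [Nat.cast_sub (by omega), Nat.cast_one]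
  have hp1' : (p : ℚ) - 1 ≠ 0 := by
    rw [← hp1]
    exact_mod_cast (by omega : p - 1 ≠ 0)
  have hinv : ((p : ℚ) - 1)⁻¹ ∈ pIntegers p := by
    rw [← hp1]
    exact inv_natCast_mem_pIntegers fun h => (Nat.le_of_dvd (by omega) h).not_gt (by omega)
  have hK : K ∈ pIntegers p := by
    have : K = -(residueSum p r (v * (u ^ j * (1 - Polynomial.X) ^ i)) : ℚ) + p * x := by
      rw [hxeq]; ring
    rw [this]
    exact add_mem (neg_mem (intCast_mem _ _)) (mul_mem (natCast_mem _ _) hx)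
  refine modCong_of_eq_add (z := ((p : ℚ) - 1)⁻¹ * (-K + x +
    (t : ℚ)⁻¹ * residueSum p r (z * (u ^ j * (1 - Polynomial.X) ^ i))))
    (mul_mem hinv (add_mem (add_mem (neg_mem hK) hx)
      (mul_mem (inv_natCast_mem_pIntegers ht) (intCast_mem _ _)))) ?_
  rw [Fp_eq_residueSum hp.out hu hi (by omega), Fp_eq_residueSum hp.out hu hi (by omega), hdiff]
  push_cast
  rw [hxeq]
  field_simp
  ring

lemma modCong_Fp_sub_div_zero (hodd : Odd p) {s : ℕ} (hs : s ≠ 0) (r : ℤ) :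
    modCong p 1 ((Fp p ((p - 1) * (p * s)) r - Fp p 0 r) / (((p : ℚ) - 1) * (p * s))) 0 := by
  obtain ⟨u, hu⟩ := exists_geom_sum_sub_eq p
  obtain ⟨w, hw⟩ := exists_eq_one_add_of_eval_one (eval_one_of_geom_sum_sub_eq hp.out hu)
  rw [map_one] at hw
  obtain ⟨v, hv⟩ := exists_pow_prime_eq hu hw
  obtain ⟨e, t, ht, rfl⟩ := Nat.exists_eq_pow_mul_and_not_dvd hs p hp.out.ne_one
  obtain ⟨z, hz⟩ := exists_one_add_pow hodd v e t
  have hdiff : residueSum p r (∑ i ∈ range p, Polynomial.X ^ i -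
        (p : Polynomial ℤ) * u ^ (p * (p ^ e * t))) =
      residueSum p r (∑ i ∈ range p, Polynomial.X ^ i - (p : Polynomial ℤ)) -
      (p ^ (e + 2) : ℕ) * residueSum p r ((t : Polynomial ℤ) * v + (p : Polynomial ℤ) * z) := by
    rw [← residueSum_natCast_mul, ← map_sub]
    refine residueSum_congr r ?_
    rw [map_sub, map_mul, map_pow_prime_mul _ AdjoinRoot.mk_self hv, hz, ← map_mul, ← map_sub]
    congr 1
    push_cast
    ring
  have h2 := hp.out.two_le
  have hp0 : (p : ℚ) ≠ 0 := by exact_mod_cast hp.out.ne_zero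
  have ht0 : (t : ℚ) ≠ 0 := by
    rintro h
    exact ht (by rw [Nat.cast_eq_zero.mp h]; exact dvd_zero p)
  have hp1 : ((p - 1 : ℕ) : ℚ) = p - 1 := by rw [Nat.cast_sub (by omega), Nat.cast_one]
  have hp1' : (p : ℚ) - 1 ≠ 0 := by
    rw [← hp1]
    exact_mod_cast (by omega : p - 1 ≠ 0)
  have hinv : ((p : ℚ) - 1)⁻¹ ∈ pIntegers p := by
    rw [← hp1]
    exact inv_natCast_mem_pIntegers fun h => (Nat.le_of_dvd (by omega) h).not_gt (by omega)
  refine modCong_of_eq_add (z := -(((p : ℚ) - 1)⁻¹ * ((t : ℚ)⁻¹ *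
    residueSum p r ((t : Polynomial ℤ) * v + (p : Polynomial ℤ) * z))))
    (neg_mem (mul_mem hinv (mul_mem (inv_natCast_mem_pIntegers ht) (intCast_mem _ _)))) ?_
  rw [Fp_mul_eq_residueSum hp.out hu, Fp_zero hp.out, hdiff]
  push_cast
  field_simp
  ring

lemma Fp_two_add_two_mul (n s : ℕ) (r : ℤ) : Fp 2 (n + 2 * s) r = Fp 2 n r := by
  have hX : (AdjoinRoot.mk (Polynomial.X ^ 2 - 1 : Polynomial ℤ)) Polynomial.X ^ 2 = 1 := by
    rw [← map_pow, ← sub_eq_zero, ← map_one (AdjoinRoot.mk (Polynomial.X ^ 2 - 1)), ← map_sub,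
      AdjoinRoot.mk_self]
  have hu : ∑ i ∈ range 2, Polynomial.X ^ i - (1 - Polynomial.X) ^ (2 - 1) =
      ((2 : ℕ) : Polynomial ℤ) * Polynomial.X := by
    simp [sum_range_succ]
    ring
  rcases Nat.eq_zero_or_pos n with rfl | hn
  · have h1 := Fp_mul_eq_residueSum Nat.prime_two hu (2 * s) r
    have h2 := Fp_mul_eq_residueSum Nat.prime_two hu 0 r
    simp only [Nat.add_one_sub_one, one_mul] at h1 h2
    rw [zero_add, h1, h2]
    congr 1
    refine residueSum_congr r ?_
    simp only [map_sub, map_mul, map_pow, pow_mul, hX, one_pow, pow_zero, map_one]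
  · obtain ⟨j, rfl⟩ : ∃ j, n = 1 + j := Nat.exists_eq_add_of_le hn
    have h1 := Fp_eq_residueSum Nat.prime_two hu one_ne_zero le_rfl (j + 2 * s) r
    have h2 := Fp_eq_residueSum Nat.prime_two hu one_ne_zero le_rfl j r
    simp only [Nat.add_one_sub_one, one_mul] at h1 h2
    rw [add_assoc, h1, h2]
    congr 1
    refine residueSum_congr r ?_
    simp only [map_mul, map_pow, pow_add, pow_mul, hX, one_pow, mul_one]

lemma nUp_eq {i j b : ℕ} (hi : i ≠ 0) (hib : i + b = p - 1) :
    nUp p (i + (p - 1) * j) = b := by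
  have h2 := hp.out.two_le
  have h1 : ((p - 1 : ℕ) : ℤ) = (p : ℤ) - 1 := by omega
  have hib' : (i : ℤ) + b = p - 1 := by omega
  have h : -((i + (p - 1) * j : ℕ) : ℤ) = b + ((p : ℤ) - 1) * (-(j + 1)) := by
    push_cast
    rw [h1]
    linear_combination -hib'
  rw [nUp, h, Int.add_mul_emod_self_left, Int.emod_eq_of_lt (by omega) (by omega), Int.toNat_natCast]

lemma modCong_Fp_add_sub_div (n : ℕ) {s μ : ℕ} (hs : s ≠ 0) (r : ℤ)
    (hμ : (μ : ℤ) ≡ -(n : ℤ) [ZMOD (p : ℤ)]) :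
    modCong p 1 ((Fp p (n + (p - 1) * (p * s)) r - Fp p n r) / (((p : ℚ) - 1) * (p * s)))
      ((-1 : ℚ) ^ (nUp p n) / ((nUp p n).factorial : ℚ) *
        ∑ k ∈ Icc 2 (nUp p n), ((nUp p n).choose k : ℚ) * (bernoulli k / (k : ℚ)) *
          bernHigherPoly μ (nUp p n - k) (-(r : ℚ))) := by
  rw [div_eq_mul_one_div ((-1 : ℚ) ^ nUp p n), mul_assoc, ← coeff_bernoulliLog_mul]
  have h2 := hp.out.two_le
  rcases hp.out.eq_two_or_odd' with rfl | hodd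
  · have hn : nUp 2 n = 0 := by simp [nUp]
    refine Or.inl ?_
    rw [hn, show (2 - 1) * (2 * s) = 2 * s by omega, Fp_two_add_two_mul, coeff_bernoulliLog_mul]
    simp
  rcases Nat.eq_zero_or_pos n with rfl | hn
  · have h := modCong_Fp_sub_div_zero hodd hs r
    rw [show nUp p 0 = 0 by simp [nUp], coeff_bernoulliLog_mul, zero_add]
    simpa using h
  obtain ⟨i, j, b, hi, hib, rfl⟩ :
      ∃ i j b, i ≠ 0 ∧ i + b = p - 1 ∧ n = i + (p - 1) * j := by
    have hlt := Nat.mod_lt (n - 1) (show 0 < p - 1 by omega)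
    have hdiv := Nat.mod_add_div (n - 1) (p - 1)
    exact ⟨(n - 1) % (p - 1) + 1, (n - 1) / (p - 1), p - 1 - ((n - 1) % (p - 1) + 1),
      by omega, by omega, by omega⟩
  rw [nUp_eq hi hib, add_assoc, ← mul_add]
  refine modCong_Fp_sub_div hodd hi hib ?_ hs r
  rw [← Int.natCast_modEq_iff]
  have h1 : ((p - 1 : ℕ) : ℤ) = (p : ℤ) - 1 := by omega
  obtain ⟨c, hc⟩ := hμ.dvd
  refine Int.modEq_iff_dvd.mpr ⟨-c - j, ?_⟩
  push_cast at hc ⊢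
  rw [h1] at hc
  linear_combination -hc

end Main

theorem stmt1 (p : ℕ) (hp : p.Prime) (r : ℤ) (m n : ℕ) (hmn : m ≠ n)
    (hcong : (m : ℤ) ≡ (n : ℤ) [ZMOD ((p:ℤ) * ((p:ℤ) - 1))])
    (μ : ℕ) (hμ : μ < p) (hμ2 : (μ : ℤ) ≡ -(n:ℤ) [ZMOD (p:ℤ)]) :
    modCong p 1 ((Fp p m r - Fp p n r) / ((m:ℚ) - (n:ℚ)))
      ((-1:ℚ)^(nUp p n) / ((nUp p n).factorial : ℚ) *
        ∑ k ∈ Finset.Icc 2 (nUp p n),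
          ((nUp p n).choose k : ℚ) * (bernoulli k / (k:ℚ)) *
            bernHigherPoly μ (nUp p n - k) (-(r:ℚ))) := by
  have : Fact p.Prime := ⟨hp⟩
  have h2 := hp.two_le
  have h1 : ((p - 1 : ℕ) : ℤ) = (p : ℤ) - 1 := by omega
  have key : ∀ a b : ℕ, a < b → (b : ℤ) ≡ (a : ℤ) [ZMOD ((p : ℤ) * ((p : ℤ) - 1))] →
      ∃ s, s ≠ 0 ∧ b = a + (p - 1) * (p * s) := by
    intro a b hab h
    have hmod : a ≡ b [MOD p * (p - 1)] := by
      rw [← Int.natCast_modEq_iff, Nat.cast_mul, h1]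
      exact h.symm
    obtain ⟨s, hs⟩ := (Nat.modEq_iff_dvd' hab.le).mp hmod
    refine ⟨s, ?_, ?_⟩
    · rintro rfl
      omega
    · have e : p * (p - 1) * s = (p - 1) * (p * s) := by ring
      omega
  have hcast : ((p - 1 : ℕ) : ℚ) = (p : ℚ) - 1 := by exact_mod_cast congrArg (Int.cast : ℤ → ℚ) h1
  rcases lt_or_gt_of_ne hmn with hlt | hlt
  · obtain ⟨s, hs, rfl⟩ := key m n hlt hcong.symm
    have hn : nUp p (m + (p - 1) * (p * s)) = nUp p m := by
      have e : -((m + (p - 1) * (p * s) : ℕ) : ℤ) = -(m : ℤ) + ((p : ℤ) - 1) * (-(p * s)) := by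
        push_cast
        rw [h1]
        ring
      rw [nUp, nUp, e, Int.add_mul_emod_self_left]
    have hμm : (μ : ℤ) ≡ -(m : ℤ) [ZMOD (p : ℤ)] := by
      refine hμ2.trans (Int.ModEq.neg (Int.modEq_iff_dvd.mpr ⟨-(((p - 1 : ℕ) : ℤ) * s), ?_⟩))
      push_cast
      ring
    have h := modCong_Fp_add_sub_div m hs r hμm
    rw [hn, ← neg_sub (Fp p (m + (p - 1) * (p * s)) r),
      show (m : ℚ) - ((m + (p - 1) * (p * s) : ℕ) : ℚ) = -(((p : ℚ) - 1) * (p * s)) by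
        push_cast [hcast]; ring, neg_div_neg_eq]
    exact h
  · obtain ⟨s, hs, rfl⟩ := key n m hlt hcong
    have h := modCong_Fp_add_sub_div n hs r hμ2
    rw [show ((n + (p - 1) * (p * s) : ℕ) : ℚ) - (n : ℚ) = ((p : ℚ) - 1) * (p * s) by
      push_cast [hcast]; ring]
    exact h
end

section
/- Let p ≥ 5 be a prime and let n > 0 be an integer with n ≢ 0 (mod p−1) and n ≢ −1 (mod p−1). Then there are at least p − n^* + 2 values of r ∈ {0,1,…,p−1} such that for every nonnegative integer m with m ≡ n (mod p(p−1)) and m ≠ n, the p-adic valuation of F_p(m,r) − F_p(n,r) equals the p-adic valuation of m − n. -/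
open Finset

section

open Polynomial

/-- The polynomial `U` with `(1 - X) ^ p = 1 - p * X * U - X ^ p`. -/
noncomputable def fleckUnit (p : ℕ) : ℤ[X] :=
  ∑ k ∈ range (p - 1), C (((p.choose (k + 1) / p : ℕ) : ℤ)) * (-X) ^ k

lemma one_sub_X_pow_prime {p : ℕ} (hp : p.Prime) (hodd : Odd p) :
    (1 - X : ℤ[X]) ^ p = 1 - C (p : ℤ) * X * fleckUnit p - X ^ p := by
  have h : (1 - X : ℤ[X]) ^ p = ∑ k ∈ range (p + 1), (-X) ^ k * (p.choose k : ℤ[X]) := by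
    rw [sub_eq_neg_add, add_pow]
    simp
  obtain ⟨j, rfl⟩ : ∃ j, p = j + 1 := ⟨p - 1, by have := hp.pos; omega⟩
  rw [h, sum_range_succ, sum_range_succ', hodd.neg_pow, fleckUnit, mul_sum, Nat.add_sub_cancel]
  have h' : ∀ k ∈ range j, (-X : ℤ[X]) ^ (k + 1) * ((j + 1).choose (k + 1) : ℤ[X]) =
      -(C ((j + 1 : ℕ) : ℤ) * X * (C ((((j + 1).choose (k + 1) / (j + 1) : ℕ) : ℤ)) * (-X) ^ k)) := by
    intro k hk
    have hd : (j + 1) * ((j + 1).choose (k + 1) / (j + 1)) = (j + 1).choose (k + 1) :=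
      Nat.mul_div_cancel' (hp.dvd_choose_self (by omega) (by have := mem_range.1 hk; omega))
    have hd' : ((j + 1).choose (k + 1) : ℤ[X]) =
        C ((j + 1 : ℕ) : ℤ) * C ((((j + 1).choose (k + 1) / (j + 1) : ℕ) : ℤ)) := by
      rw [← C_mul, ← Nat.cast_mul, hd]; simp
    rw [hd']; ring
  rw [sum_congr rfl h', sum_neg_distrib]
  simp
  ring

lemma fleckUnit_expansion {p : ℕ} (hp : p.Prime) (hp5 : 5 ≤ p) :
    ∃ (a b : ℤ) (V : ℤ[X]), fleckUnit p = 1 + C a * X + C b * X ^ 2 + X ^ 3 * V ∧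
      2 * a = 1 - p ∧ 6 * b = (p - 1) * (p - 2) := by
  obtain ⟨c, hc⟩ : p ∣ p.choose 2 := hp.dvd_choose_self (by omega) (by omega)
  obtain ⟨d, hd⟩ : p ∣ p.choose 3 := hp.dvd_choose_self (by omega) (by omega)
  have hc' := Nat.choose_succ_right_eq p 1
  have hd' := Nat.choose_succ_right_eq p 2
  norm_num at hc' hd'
  have hp0 : (p : ℤ) ≠ 0 := by have := hp.pos; positivity
  have ec : (c : ℤ) * 2 = p - 1 := by
    rw [hc] at hc'
    zify [show 1 ≤ p by omega] at hc'
    apply mul_left_cancel₀ hp0; linarith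
  have ed : (d : ℤ) * 3 = c * (p - 2) := by
    rw [hd, hc] at hd'
    zify [show 2 ≤ p by omega] at hd'
    apply mul_left_cancel₀ hp0; linarith
  refine ⟨-c, d, -∑ k ∈ range (p - 4), C (((p.choose (k + 4) / p : ℕ) : ℤ)) * (-X) ^ k, ?_, ?_, ?_⟩
  · rw [fleckUnit, show p - 1 = p - 4 + 3 by omega, sum_range_succ', sum_range_succ',
      sum_range_succ', mul_neg, mul_sum, ← sum_neg_distrib]
    have hs : ∀ k : ℕ, C (((p.choose (k + 1 + 1 + 1 + 1) / p : ℕ) : ℤ)) * (-X : ℤ[X]) ^ (k + 1 + 1 + 1) =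
      -(X ^ 3 * (C (((p.choose (k + 4) / p : ℕ) : ℤ)) * (-X) ^ k)) := fun k => by ring
    simp only [hs]
    simp [hc, hd, Nat.mul_div_cancel_left _ hp.pos, Nat.div_self hp.pos]
    ring
  · linarith
  · linear_combination 2 * ed + (p - 2 : ℤ) * ec

lemma exists_pow_prime_eq_expand {p : ℕ} (hp : p.Prime) (f : ℤ[X]) :
    ∃ Y, f ^ p = expand ℤ p f + C (p : ℤ) * Y := by
  have := Fact.mk hp
  have h : C (p : ℤ) ∣ f ^ p - expand ℤ p f := by
    rw [C_dvd_iff_dvd_coeff]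
    intro i
    rw [← ZMod.intCast_zmod_eq_zero_iff_dvd, ← eq_intCast (Int.castRingHom (ZMod p)), ← coeff_map]
    simp [Polynomial.map_sub, Polynomial.map_pow, map_expand, ZMod.expand_card]
  obtain ⟨Y, hY⟩ := h
  exact ⟨Y, by rw [← hY]; ring⟩

lemma pow_expansion (a b : ℤ) (V : ℤ[X]) (n : ℕ) :
    ∃ V', (1 + C a * X + C b * X ^ 2 + X ^ 3 * V) ^ n =
      1 + C (n * a) * X + C (n * b + n.choose 2 * a ^ 2) * X ^ 2 + X ^ 3 * V' := by
  induction n with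
  | zero => exact ⟨0, by simp⟩
  | succ n ih =>
    obtain ⟨V', h⟩ := ih
    rw [pow_succ, h, Nat.choose_succ_succ' n 1]
    refine ⟨C (n * a * b + (n * b + n.choose 2 * a ^ 2) * a) +
      C (n * b + n.choose 2 * a ^ 2) * C b * X +
      V * (1 + C (n * a) * X + C (n * b + n.choose 2 * a ^ 2) * X ^ 2) +
      V' * (1 + C a * X + C b * X ^ 2 + X ^ 3 * V), ?_⟩
    simp
    ring

lemma one_add_pow_eq {R : Type*} [CommRing R] (z : R) (n : ℕ) :
    ∃ E, (1 + z) ^ n = 1 + n * z + n.choose 2 * z ^ 2 + z ^ 3 * E := by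
  induction n with
  | zero => exact ⟨0, by simp⟩
  | succ n ih =>
    obtain ⟨E, h⟩ := ih
    rw [pow_succ, h, Nat.choose_succ_succ' n 1]
    refine ⟨n.choose 2 + E * (1 + z), ?_⟩
    push_cast
    simp
    ring

lemma one_add_mul_pow_prime_pow {R : Type*} [CommRing R] {p : ℕ} (hp : p.Prime) (hp3 : 3 ≤ p)
    (W : R) (v : ℕ) :
    ∃ E, (1 + p * W) ^ (p ^ v) = 1 + p ^ (v + 1) * (W + p * E) := by
  induction v with
  | zero => exact ⟨0, by simp⟩
  | succ v ih =>
    obtain ⟨E, h⟩ := ih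
    obtain ⟨c, hc⟩ : p ∣ p.choose 2 := hp.dvd_choose_self (by omega) (by omega)
    obtain ⟨E', h'⟩ := one_add_pow_eq ((p : R) ^ (v + 1) * (W + p * E)) p
    rw [pow_succ p v, pow_mul, h, h', hc]
    refine ⟨E + c * p ^ v * (W + p * E) ^ 2 + p ^ v * p ^ v * (W + p * E) ^ 3 * E', ?_⟩
    push_cast
    ring

lemma one_add_mul_pow_eq {R : Type*} [CommRing R] {p : ℕ} (hp : p.Prime) (hp3 : 3 ≤ p)
    (W : R) (v k : ℕ) :
    ∃ E, (1 + p * W) ^ (p ^ v * k) = 1 + p ^ (v + 1) * (k * W + p * E) := by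
  obtain ⟨E, h⟩ := one_add_mul_pow_prime_pow hp hp3 W v
  obtain ⟨E', h'⟩ := one_add_pow_eq ((p : R) ^ (v + 1) * (W + p * E)) k
  rw [pow_mul, h, h']
  refine ⟨k * E + k.choose 2 * p ^ v * (W + p * E) ^ 2 +
    p ^ v * p ^ (v + 1) * (W + p * E) ^ 3 * E', ?_⟩
  ring

/-- Modulo `(1 - X) ^ p - 1`, the `p`-th power of `fleckUnit p` is `1 + p * W`, where
`W` is congruent to a unit multiple of `X ^ 2` modulo `p` and `X ^ 3`. -/
lemma exists_fleckUnit_pow_prime {p : ℕ} (hp : p.Prime) (hp5 : 5 ≤ p) :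
    ∃ (W A B : ℤ[X]) (c : ℤ), ((1 - X) ^ p - 1 : ℤ[X]) ∣ fleckUnit p ^ p - (1 + (p : ℤ[X]) * W) ∧
      W = C c * X ^ 2 + X ^ 3 * A + (p : ℤ[X]) * B ∧ ¬ (p : ℤ) ∣ c := by
  have hodd : Odd p := hp.odd_of_ne_two (by omega)
  obtain ⟨a, b, V, hU, ha, hb⟩ := fleckUnit_expansion hp hp5
  obtain ⟨Y, hY⟩ := exists_pow_prime_eq_expand hp (fleckUnit p)
  obtain ⟨V', hV'⟩ := pow_expansion a b V p
  obtain ⟨c, hc⟩ : p ∣ p.choose 2 := hp.dvd_choose_self (by omega) (by omega)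
  have hc' := Nat.choose_succ_right_eq p 1
  norm_num at hc'
  have hp0 : (p : ℤ) ≠ 0 := by have := hp.pos; positivity
  have ec : (c : ℤ) * 2 = p - 1 := by
    rw [hc] at hc'
    zify [show 1 ≤ p by omega] at hc'
    apply mul_left_cancel₀ hp0; linarith
  have hexp : expand ℤ p (fleckUnit p) =
      1 + C a * X ^ p + C b * X ^ (p * 2) + X ^ (p * 3) * expand ℤ p V := by
    rw [hU]; simp [← pow_mul]
  rw [← hU, hY, hexp, hc] at hV'
  obtain ⟨j, hj⟩ : ∃ j, p = j + 3 := ⟨p - 3, by omega⟩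
  -- the higher order part of `Y`
  have hdvd : C (p : ℤ) ∣ X ^ 3 * (V' - X ^ j * (C a + C b * X ^ p +
      X ^ (p * 2) * expand ℤ p V)) := by
    refine ⟨Y - C a * X - C (b + c * a ^ 2) * X ^ 2, ?_⟩
    have hXp : (X : ℤ[X]) ^ p = X ^ j * X ^ 3 := by rw [hj, pow_add]
    simp only [pow_mul, hXp] at hV' ⊢
    simp only [map_add, map_mul, map_pow, map_natCast, Nat.cast_mul] at hV' ⊢
    linear_combination -hV'
  have hdvd' : C (p : ℤ) ∣ V' - X ^ j * (C a + C b * X ^ p + X ^ (p * 2) * expand ℤ p V) := by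
    rw [C_dvd_iff_dvd_coeff] at hdvd ⊢
    intro i
    simpa [coeff_X_pow_mul] using hdvd (i + 3)
  obtain ⟨Z, hZ⟩ := hdvd'
  have hYZ : Y = C a * X + C (b + c * a ^ 2) * X ^ 2 + X ^ 3 * Z := by
    have hp0' : C (p : ℤ) ≠ 0 := by simpa using hp.ne_zero
    apply mul_left_cancel₀ hp0'
    have hXp : (X : ℤ[X]) ^ p = X ^ j * X ^ 3 := by rw [hj, pow_add]
    simp only [pow_mul, hXp] at hV' hZ ⊢
    simp only [map_add, map_mul, map_pow, map_natCast, Nat.cast_mul] at hV' hZ ⊢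
    linear_combination hV' + X ^ 3 * hZ
  set U := fleckUnit p with hUdef
  refine ⟨Y - C a * X * U + (p : ℤ[X]) * X ^ 2 * U ^ 2 * (C b - (p : ℤ[X]) * X * U * expand ℤ p V),
    Z - C a * (C b + X * V), X ^ 2 * U ^ 2 * (C b - (p : ℤ[X]) * X * U * expand ℤ p V),
    b + c * a ^ 2 - a ^ 2, ?_, ?_, ?_⟩
  · have hQ := one_sub_X_pow_prime hp hodd
    rw [hQ, hY, hexp]
    simp only [pow_mul]
    have e : (1 - C (p : ℤ) * X * U - X ^ p - 1 : ℤ[X]) = -(X ^ p - (-((p : ℤ[X]) * X * U))) := by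
      simp; ring
    rw [e, neg_dvd]
    have d1 := sub_dvd_pow_sub_pow (X ^ p : ℤ[X]) (-((p : ℤ[X]) * X * U)) 2
    have d2 := sub_dvd_pow_sub_pow (X ^ p : ℤ[X]) (-((p : ℤ[X]) * X * U)) 3
    convert ((dvd_refl (X ^ p - (-((p : ℤ[X]) * X * U)) : ℤ[X])).mul_left (C a)).add
      ((d1.mul_left (C b)).add (d2.mul_left (expand ℤ p V))) using 1
    simp only [map_natCast]
    ring
  · rw [hYZ]
    nth_rewrite 1 [hU]
    simp only [map_add, map_mul, map_pow, map_natCast, map_sub]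
    ring
  · intro h
    have h24 : (p : ℤ) ∣ 24 * (b + c * a ^ 2 - a ^ 2) + 1 := by
      have e2 : 4 * a ^ 2 = (1 - p) ^ 2 := by rw [← ha]; ring
      refine ⟨4 * p + 3 * ((p : ℤ) - 3) * (p - 2) - 9, ?_⟩
      have : 24 * (b + c * a ^ 2 - a ^ 2) = 4 * (6 * b) + 3 * (c * 2) * (4 * a ^ 2) - 6 * (4 * a ^ 2) := by
        ring
      rw [this, hb, ec, e2]
      ring
    have h1 : (p : ℤ) ∣ 1 := (Int.dvd_add_right (h.mul_left 24)).1 h24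
    have := Int.le_of_dvd one_pos h1
    omega

lemma X_pow_modByMonic {p : ℕ} (hp : 0 < p) (k : ℕ) :
    (X ^ k : ℤ[X]) %ₘ (X ^ p - 1) = X ^ (k % p) := by
  have hm : (X ^ p - 1 : ℤ[X]).Monic := monic_X_pow_sub_C 1 hp.ne'
  have hdeg : (X ^ p - 1 : ℤ[X]).degree = p := degree_X_pow_sub_C hp 1
  have h : (X ^ p - 1 : ℤ[X]) ∣ X ^ k - X ^ (k % p) := by
    have h := (sub_dvd_pow_sub_pow (X ^ p : ℤ[X]) 1 (k / p)).mul_left (X ^ (k % p))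
    rwa [one_pow, mul_sub, mul_one, ← pow_mul, ← pow_add, Nat.mod_add_div] at h
  rw [modByMonic_eq_of_dvd_sub hm h, (modByMonic_eq_self_iff hm).2]
  rw [hdeg, degree_X_pow]
  exact_mod_cast Nat.mod_lt k hp

lemma Cp_eq_coeff {p r : ℕ} (hr : r < p) (n : ℕ) :
    Cp p n r = (((1 - X : ℤ[X]) ^ n %ₘ (X ^ p - 1)).coeff r : ℤ) := by
  have h : (1 - X : ℤ[X]) ^ n = ∑ k ∈ range (n + 1), ((-1 : ℤ) ^ k * n.choose k) • X ^ k := by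
    rw [sub_eq_neg_add, add_pow]
    refine sum_congr rfl fun k _ => ?_
    rw [neg_pow, zsmul_eq_mul]
    push_cast
    simp
    ring
  rw [h, ← modByMonicHom_apply, map_sum, finsetSum_coeff, Cp, Int.cast_sum]
  refine sum_congr rfl fun k _ => ?_
  have hiff : ((k : ℤ) - r) % p = 0 ↔ r = k % p := by
    rw [← Int.dvd_iff_emod_eq_zero, ← Nat.modEq_iff_dvd]
    unfold Nat.ModEq
    rw [Nat.mod_eq_of_lt hr]
  rw [map_zsmul, modByMonicHom_apply, X_pow_modByMonic (by omega), coeff_smul, coeff_X_pow]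
  by_cases hk : r = k % p
  · simp [hiff, ← hk]
  · simp [hiff, hk]

/-- A nonzero polynomial of degree less than `p` in characteristic `p` that is divisible by
`(X - 1) ^ i` has more than `i` nonzero coefficients. -/
lemma lt_card_support_of_X_sub_one_pow_dvd {K : Type*} [Field K] {p : ℕ} [CharP K p]
    (i : ℕ) (f : K[X]) (hf : f ≠ 0) (hdeg : f.natDegree < p) (h : (X - 1) ^ i ∣ f) :
    i < #f.support := by
  induction i generalizing f with
  | zero => simpa [Finset.card_pos] using hf
  | succ i ih =>
    -- divide by the largest power of `X`
    obtain ⟨g, hg, hg0⟩ := exists_eq_pow_rootMultiplicity_mul_and_not_dvd f hf 0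
    rw [C_0, sub_zero] at hg hg0
    set e := rootMultiplicity 0 f
    rw [X_dvd_iff] at hg0
    have hgne : g ≠ 0 := by rintro rfl; simp at hg0
    have hcop : IsCoprime ((X - 1 : K[X]) ^ (i + 1)) (X ^ e) := by
      refine IsCoprime.pow ⟨-1, 1, by ring⟩
    have hgd : (X - 1) ^ (i + 1) ∣ g := hcop.dvd_of_dvd_mul_left (hg ▸ h)
    have hcard : #g.support ≤ #f.support := by
      refine card_le_card_of_injOn (· + e) (fun k hk => ?_) (fun _ _ _ _ h => by simpa using h)
      rw [hg]
      simpa [coeff_X_pow_mul] using hk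
    have hgdeg : g.natDegree < p := by
      refine lt_of_le_of_lt ?_ hdeg
      rw [hg, natDegree_mul (by simp) hgne]
      omega
    have hderiv : (derivative g).support ⊆ (g.support.erase 0).image (· - 1) := by
      intro k hk
      rw [mem_support_iff, coeff_derivative] at hk
      exact mem_image.2 ⟨k + 1, by simpa using left_ne_zero_of_mul hk, rfl⟩
    have hderiv0 : derivative g ≠ 0 := by
      intro h0
      have hdg : g.natDegree = 0 := by
        by_contra hne
        have hc := congrArg (coeff · (g.natDegree - 1)) h0
        simp only [coeff_derivative, coeff_zero] at hc
        rw [Nat.sub_add_cancel (by omega)] at hc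
        rcases mul_eq_zero.1 hc with hc | hc
        · exact hgne (leadingCoeff_eq_zero.1 hc)
        · have hc' : ((g.natDegree : ℕ) : K) = 0 := by
            rw [← hc, Nat.cast_sub (by omega)]; simp
          rw [CharP.cast_eq_zero_iff K p] at hc'
          exact absurd (Nat.le_of_dvd (by omega) hc') (by omega)
      rw [eq_C_of_natDegree_eq_zero hdg] at hgd
      have hev := (dvd_pow_self (X - 1 : K[X]) i.succ_ne_zero).trans hgd
      rw [← C_1, dvd_iff_isRoot] at hev
      simp at hev
      exact hg0 hev
    have hddvd : (X - 1) ^ i ∣ derivative g := by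
      obtain ⟨t, rfl⟩ := hgd
      simp only [derivative_mul, derivative_pow]
      refine dvd_add ?_ ?_
      · refine Dvd.dvd.mul_right (Dvd.dvd.mul_right ?_ _) _
        simp
      · exact Dvd.dvd.mul_right (pow_dvd_pow _ (by omega)) _
    have hlt := ih (derivative g) hderiv0 (by have := natDegree_derivative_le g; omega) hddvd
    have h1 := (card_le_card hderiv).trans card_image_le
    rw [card_erase_of_mem (by simpa using hg0)] at h1
    omega

lemma card_coeff_modByMonic {p : ℕ} [Fact p.Prime] {i : ℕ} (hi : i < p) (h : (ZMod p)[X])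
    (h1 : h.eval 1 ≠ 0) :
    i < #(((X - 1) ^ i * h) %ₘ (X ^ p - 1)).support := by
  have hp : p.Prime := Fact.out
  have hm : (X ^ p - 1 : (ZMod p)[X]).Monic := monic_X_pow_sub_C 1 hp.ne_zero
  have hXp : (X ^ p - 1 : (ZMod p)[X]) = (X - 1) ^ p := by rw [sub_pow_char, one_pow]
  refine lt_card_support_of_X_sub_one_pow_dvd (p := p) i _ ?_ ?_ ?_
  · rw [Ne, modByMonic_eq_zero_iff_dvd hm, hXp]
    intro hd
    rw [← pow_mul_pow_sub _ hi.le] at hd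
    have hd' := (mul_dvd_mul_iff_left (pow_ne_zero i (X_sub_C_ne_zero (1 : ZMod p)))).1 hd
    have hd2 := (dvd_pow_self (X - 1 : (ZMod p)[X]) (by omega : p - i ≠ 0)).trans hd'
    rw [← C_1, dvd_iff_isRoot] at hd2
    exact h1 hd2
  · have hlt := natDegree_modByMonic_lt ((X - 1) ^ i * h) hm (fun h' => by
      have := congrArg natDegree h'
      rw [← C_1, natDegree_X_pow_sub_C] at this
      simp [hp.ne_zero] at this)
    rwa [← C_1, natDegree_X_pow_sub_C] at hlt
  · rw [modByMonic_eq_sub_mul_div, hXp]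
    exact dvd_sub (dvd_mul_right _ _) ((pow_dvd_pow _ hi.le).mul_right _)

/-- The coefficient of `X ^ r` in the reduction of `f (1 - X)` modulo `X ^ p - 1`. -/
noncomputable def residueCoeff (p r : ℕ) : ℤ[X] →ₗ[ℤ] ℤ :=
  lcoeff ℤ r ∘ₗ modByMonicHom (X ^ p - 1) ∘ₗ (aeval (1 - X : ℤ[X])).toLinearMap

lemma residueCoeff_apply (p r : ℕ) (f : ℤ[X]) :
    residueCoeff p r f = (aeval (1 - X : ℤ[X]) f %ₘ (X ^ p - 1)).coeff r := rfl

lemma residueCoeff_natCast_mul (p r k : ℕ) (f : ℤ[X]) :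
    residueCoeff p r ((k : ℤ[X]) * f) = k * residueCoeff p r f := by
  rw [← nsmul_eq_mul, map_nsmul, nsmul_eq_mul]

lemma residueCoeff_congr {p : ℕ} (hp : 0 < p) (r : ℕ) {f g : ℤ[X]}
    (h : ((1 - X) ^ p - 1 : ℤ[X]) ∣ f - g) : residueCoeff p r f = residueCoeff p r g := by
  have h' := map_dvd (aeval (1 - X : ℤ[X])) h
  simp only [map_sub, map_pow, map_one, aeval_X, sub_sub_cancel] at h'
  have hm : (X ^ p - 1 : ℤ[X]).Monic := monic_X_pow_sub_C 1 hp.ne'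
  rw [residueCoeff_apply, residueCoeff_apply, modByMonic_eq_of_dvd_sub hm h']

lemma dvd_X_pow_sub_fleckUnit_pow {p : ℕ} (hp : p.Prime) (hodd : Odd p) (q s : ℕ) :
    ((1 - X) ^ p - 1 : ℤ[X]) ∣
      X ^ (q * (p - 1) + s + 1) - (-p : ℤ) ^ q • (X ^ (s + 1) * fleckUnit p ^ q) := by
  induction q with
  | zero => simp
  | succ q ih =>
    obtain ⟨t, ht⟩ := ih
    have hQ := one_sub_X_pow_prime hp hodd
    have hX : (X : ℤ[X]) ^ ((q + 1) * (p - 1) + s + 1) = X ^ (q * (p - 1) + s) * X ^ p := by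
      rw [← pow_add]
      congr 1
      have := hp.pos
      rw [add_mul]
      omega
    rw [hX, zsmul_eq_mul]
    rw [zsmul_eq_mul] at ht
    refine ⟨-X ^ (q * (p - 1) + s) - (p : ℤ[X]) * fleckUnit p * t, ?_⟩
    simp only [map_natCast] at hQ
    push_cast at ht ⊢
    linear_combination X ^ (q * (p - 1) + s) * hQ - (p : ℤ[X]) * fleckUnit p * ht

lemma Fp_eq_residueCoeff {p r : ℕ} (hp : p.Prime) (hodd : Odd p) (hr : r < p) {q s : ℕ}
    (hs : s < p - 1) :
    Fp p (q * (p - 1) + s + 1) r = residueCoeff p r (X ^ (s + 1) * fleckUnit p ^ q) := by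
  have hfdiv : Int.fdiv (((q * (p - 1) + s + 1 : ℕ) : ℤ) - 1) ((p : ℤ) - 1) = q := by
    have e : (p : ℤ) - 1 = ((p - 1 : ℕ) : ℤ) := by rw [Nat.cast_sub hp.one_le]; simp
    have e' : ((q * (p - 1) + s + 1 : ℕ) : ℤ) - 1 = ((q * (p - 1) + s : ℕ) : ℤ) := by push_cast; ring
    rw [e, e', Int.fdiv_eq_ediv_of_nonneg _ (by positivity), ← Int.natCast_div,
      Nat.add_comm, Nat.add_mul_div_right _ _ (by omega), Nat.div_eq_of_lt hs, zero_add]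
  have hC : Cp p (q * (p - 1) + s + 1) r =
      (-p : ℚ) ^ q * residueCoeff p r (X ^ (s + 1) * fleckUnit p ^ q) := by
    have h := residueCoeff_congr hp.pos r (dvd_X_pow_sub_fleckUnit_pow hp hodd q s)
    rw [map_zsmul, residueCoeff_apply, map_pow, aeval_X] at h
    rw [Cp_eq_coeff hr, h]
    simp
  have hp0 : (-p : ℚ) ≠ 0 := by simpa using hp.ne_zero
  rw [Fp, hfdiv, hC, if_neg (by omega), add_zero, zpow_neg, zpow_natCast,
    inv_mul_cancel_left₀ (pow_ne_zero q hp0)]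

lemma exists_residueCoeff_mul_pow_eq {p : ℕ} (hp : p.Prime) (hp5 : 5 ≤ p) {W : ℤ[X]}
    (hW : ((1 - X) ^ p - 1 : ℤ[X]) ∣ fleckUnit p ^ p - (1 + (p : ℤ[X]) * W)) (r v k : ℕ)
    (f : ℤ[X]) :
    ∃ e, residueCoeff p r (f * fleckUnit p ^ (p * (p ^ v * k))) =
      residueCoeff p r f + p ^ (v + 1) * (k * residueCoeff p r (f * W) + p * e) := by
  obtain ⟨E, hE⟩ := one_add_mul_pow_eq hp (by omega) W v k
  refine ⟨residueCoeff p r (f * E), ?_⟩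
  have h := (hW.trans (sub_dvd_pow_sub_pow _ _ (p ^ v * k))).mul_left f
  rw [hE, ← pow_mul, mul_sub] at h
  rw [residueCoeff_congr hp.pos r h]
  have e : f * (1 + (p : ℤ[X]) ^ (v + 1) * (k * W + p * E)) =
      f + ((p ^ (v + 1) : ℕ) : ℤ[X]) * ((k : ℤ[X]) * (f * W) + (p : ℤ[X]) * (f * E)) := by
    push_cast; ring
  rw [e, map_add, residueCoeff_natCast_mul, map_add, residueCoeff_natCast_mul,
    residueCoeff_natCast_mul]
  push_cast
  rfl

lemma dvd_residueCoeff_mul_pow_iff {p : ℕ} (hp : p.Prime) (hp5 : 5 ≤ p) {W : ℤ[X]}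
    (hW : ((1 - X) ^ p - 1 : ℤ[X]) ∣ fleckUnit p ^ p - (1 + (p : ℤ[X]) * W)) (r k : ℕ)
    (f : ℤ[X]) :
    (p : ℤ) ∣ residueCoeff p r (f * fleckUnit p ^ (p * k)) ↔ (p : ℤ) ∣ residueCoeff p r f := by
  obtain ⟨e, he⟩ := exists_residueCoeff_mul_pow_eq hp hp5 hW r 0 k f
  rw [pow_zero, one_mul, zero_add, pow_one] at he
  rw [he]
  exact Int.dvd_add_left (dvd_mul_right _ _)

lemma padicValRat_Fp_sub {p r : ℕ} (hp : p.Prime) (hp5 : 5 ≤ p) {W : ℤ[X]}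
    (hW : ((1 - X) ^ p - 1 : ℤ[X]) ∣ fleckUnit p ^ p - (1 + (p : ℤ[X]) * W)) (hr : r < p)
    {q s k : ℕ} (hs : s < p - 1) (hk : k ≠ 0)
    (hdvd : ¬ (p : ℤ) ∣ residueCoeff p r (X ^ (s + 1) * fleckUnit p ^ q * W)) :
    padicValRat p (Fp p ((q + p * k) * (p - 1) + s + 1) r - Fp p (q * (p - 1) + s + 1) r) =
      padicValRat p ((((q + p * k) * (p - 1) + s + 1 : ℕ) : ℚ) -
        ((q * (p - 1) + s + 1 : ℕ) : ℚ)) := by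
  have := Fact.mk hp
  have hodd : Odd p := hp.odd_of_ne_two (by omega)
  have hpZ : Prime (p : ℤ) := Nat.prime_iff_prime_int.1 hp
  obtain ⟨v, k', hk', rfl⟩ := Nat.exists_eq_pow_mul_and_not_dvd hk p hp.ne_one
  obtain ⟨e, he⟩ := exists_residueCoeff_mul_pow_eq hp hp5 hW r v k' (X ^ (s + 1) * fleckUnit p ^ q)
  rw [mul_assoc, ← pow_add] at he
  have hval : ∀ z : ℤ, ¬ (p : ℤ) ∣ z →
      padicValRat p (((p : ℤ) ^ (v + 1) * z : ℤ) : ℚ) = v + 1 := by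
    intro z hz
    have hz0 : z ≠ 0 := by rintro rfl; simp at hz
    rw [padicValRat.of_int, padicValInt.mul (pow_ne_zero _ hpZ.ne_zero) hz0,
      padicValInt.eq_zero_of_not_dvd hz, ← Nat.cast_pow, padicValInt.of_nat, padicValNat.prime_pow]
    simp
  rw [Fp_eq_residueCoeff hp hodd hr hs, Fp_eq_residueCoeff hp hodd hr hs, he]
  have hk'' : ¬ (p : ℤ) ∣ k' := by rwa [Int.natCast_dvd_natCast]
  have h1 := hval (k' * residueCoeff p r (X ^ (s + 1) * fleckUnit p ^ q * W) + p * e) (by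
    rw [Int.dvd_add_left (dvd_mul_right _ _), hpZ.dvd_mul]
    tauto)
  have h2 := hval (k' * (p - 1)) (by
    rw [hpZ.dvd_mul, not_or]
    refine ⟨hk'', fun h => ?_⟩
    have h' : (p : ℤ) ∣ 1 := by simpa using dvd_sub (dvd_refl (p : ℤ)) h
    exact hpZ.not_dvd_one h')
  trans (v + 1 : ℤ)
  · rw [← h1]
    push_cast
    congr 1
    ring
  · rw [← h2]
    push_cast [hp.one_le]
    congr 1
    ring

lemma lt_card_filter_not_dvd_residueCoeff {p : ℕ} (hp : p.Prime) (hp5 : 5 ≤ p)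
    {W A B : ℤ[X]} {c : ℤ} (hW : W = C c * X ^ 2 + X ^ 3 * A + (p : ℤ[X]) * B)
    (hc : ¬ (p : ℤ) ∣ c) {q s : ℕ} (hs : s + 3 < p) :
    s + 3 < #{r ∈ range p |
      ¬ (p : ℤ) ∣ residueCoeff p r (X ^ (s + 1) * fleckUnit p ^ q * W)} := by
  have := Fact.mk hp
  obtain ⟨a, b, V, hU, -, -⟩ := fleckUnit_expansion hp hp5
  let φ : ℤ[X] →+* (ZMod p)[X] :=
    (mapRingHom (Int.castRingHom (ZMod p))).comp (aeval (1 - X : ℤ[X]) : ℤ[X] →ₐ[ℤ] ℤ[X]).toRingHom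
  have hφ : ∀ f, φ f = (aeval (1 - X : ℤ[X]) f).map (Int.castRingHom (ZMod p)) := fun f => rfl
  have hφX : φ X = 1 - X := by simp [hφ]
  have hφC : ∀ z : ℤ, φ (C z) = C (z : ZMod p) := fun z => by simp [hφ]
  have hm : (X ^ p - 1 : ℤ[X]).Monic := monic_X_pow_sub_C 1 hp.ne_zero
  have hm' : (X ^ p - 1 : (ZMod p)[X]).Monic := monic_X_pow_sub_C 1 hp.ne_zero
  have hcoeff : ∀ (r : ℕ) (f : ℤ[X]), ¬ (p : ℤ) ∣ residueCoeff p r f ↔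
      r ∈ (φ f %ₘ (X ^ p - 1)).support := by
    intro r f
    rw [← ZMod.intCast_zmod_eq_zero_iff_dvd, ← eq_intCast (Int.castRingHom (ZMod p)),
      residueCoeff_apply, ← coeff_map, map_modByMonic _ hm, mem_support_iff, hφ]
    simp
  set f := X ^ (s + 1) * fleckUnit p ^ q * W with hf
  have hfac : φ f = (X - 1) ^ (s + 3) *
      ((-1) ^ (s + 3) * φ (fleckUnit p) ^ q * (C (c : ZMod p) + (1 - X) * φ A)) := by
    have hWφ : φ W = (1 - X) ^ 2 * (C (c : ZMod p) + (1 - X) * φ A) := by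
      rw [hW]
      simp only [map_add, map_mul, map_pow, hφX, hφC, map_natCast, CharP.cast_eq_zero]
      ring
    have hneg : (1 - X : (ZMod p)[X]) ^ (s + 3) = (X - 1) ^ (s + 3) * (-1) ^ (s + 3) := by
      rw [← mul_pow]
      ring
    rw [hf, map_mul, map_mul, map_pow, map_pow, hWφ, hφX]
    linear_combination φ (fleckUnit p) ^ q * (C (c : ZMod p) + (1 - X) * φ A) * hneg
  have hcard := card_coeff_modByMonic hs
    ((-1) ^ (s + 3) * φ (fleckUnit p) ^ q * (C (c : ZMod p) + (1 - X) * φ A)) (by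
      have hUφ : (φ (fleckUnit p)).eval 1 = 1 := by
        rw [hU]
        simp [hφX]
      have hc' : (c : ZMod p) ≠ 0 := by rwa [Ne, ZMod.intCast_zmod_eq_zero_iff_dvd]
      simp [hUφ, hc'])
  rw [← hfac] at hcard
  refine hcard.trans_le (card_le_card fun r hr => ?_)
  rw [mem_filter, mem_range, hcoeff]
  refine ⟨?_, hr⟩
  have hdeg := degree_modByMonic_lt (φ f) hm'
  rw [← C_1, degree_X_pow_sub_C hp.pos, C_1] at hdeg
  exact_mod_cast (le_degree_of_mem_supp r hr).trans_lt hdeg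

end

lemma nUp_eq_s2 {p q s : ℕ} (hs : s < p - 1) : nUp p (q * (p - 1) + s + 1) = p - 2 - s := by
  have e : -(((q * (p - 1) + s + 1 : ℕ) : ℤ)) =
      ((p - 2 - s : ℕ) : ℤ) + ((p : ℤ) - 1) * (-(q + 1)) := by
    push_cast [show 1 ≤ p by omega, show 2 ≤ p by omega, show s ≤ p - 2 by omega]
    ring
  rw [nUp, e, Int.add_mul_emod_self_left, Int.emod_eq_of_lt (by omega) (by omega),
    Int.toNat_natCast]

theorem stmt2 (p : ℕ) (hp : p.Prime) (hp5 : 5 ≤ p) (n : ℕ) (hn : 0 < n)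
    (h1 : ¬ (((p:ℤ) - 1) ∣ (n:ℤ))) (h2 : ¬ (((p:ℤ) - 1) ∣ ((n:ℤ) + 1))) :
    ∃ S : Finset ℕ, S ⊆ Finset.range p ∧ p - nUp p n + 2 ≤ S.card ∧
      ∀ r ∈ S, ∀ m : ℕ, (m:ℤ) ≡ (n:ℤ) [ZMOD ((p:ℤ) * ((p:ℤ) - 1))] → m ≠ n →
        padicValRat p (Fp p m (r:ℤ) - Fp p n (r:ℤ)) = padicValRat p ((m:ℚ) - (n:ℚ)) := by
  obtain ⟨W, A, B, c, hWdvd, hW, hc⟩ := exists_fleckUnit_pow_prime hp hp5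
  obtain ⟨q, s, hs, rfl⟩ : ∃ q s, s < p - 1 ∧ n = q * (p - 1) + s + 1 :=
    ⟨(n - 1) / (p - 1), (n - 1) % (p - 1), Nat.mod_lt _ (by omega), by
      have := Nat.div_add_mod' (n - 1) (p - 1)
      omega⟩
  have hs0 : s ≠ p - 2 := by
    rintro rfl
    refine h1 ⟨q + 1, ?_⟩
    push_cast [show 1 ≤ p by omega, show 2 ≤ p by omega]
    ring
  have hs1 : s ≠ p - 3 := by
    rintro rfl
    refine h2 ⟨q + 1, ?_⟩
    push_cast [show 1 ≤ p by omega, show 3 ≤ p by omega]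
    ring
  have hcard := lt_card_filter_not_dvd_residueCoeff hp hp5 hW hc (q := q) (s := s) (by omega)
  refine ⟨{r ∈ range p | ¬ (p : ℤ) ∣ residueCoeff p r
    (Polynomial.X ^ (s + 1) * fleckUnit p ^ q * W)}, filter_subset _ _, ?_, fun r hr m hm hne => ?_⟩
  · refine le_trans ?_ hcard
    rw [nUp_eq_s2 hs]
    omega
  obtain ⟨hrp, hdvd⟩ := mem_filter.1 hr
  rw [mem_range] at hrp
  obtain ⟨t, ht⟩ := hm.symm.dvd
  have hcast : ((p - 1 : ℕ) : ℤ) = p - 1 := by push_cast [hp.one_le]; ring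
  rcases le_or_gt 0 t with ht0 | ht0
  · lift t to ℕ using ht0
    have hm' : m = (q + p * t) * (p - 1) + s + 1 := by
      zify
      push_cast [hcast] at ht ⊢
      linear_combination ht
    subst hm'
    exact padicValRat_Fp_sub hp hp5 hWdvd hrp hs (by rintro rfl; simp at hne) hdvd
  · obtain ⟨k, hk⟩ : ∃ k : ℕ, t = -k := ⟨t.natAbs, by omega⟩
    subst hk
    have hm' : (m : ℤ) = (q - p * k) * (p - 1) + s + 1 := by
      push_cast [hcast] at ht ⊢
      linear_combination ht
    have hqk : (0 : ℤ) ≤ q - p * k := by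
      by_contra hneg
      have hp1 : (0 : ℤ) ≤ p - 1 := by omega
      have := mul_le_mul_of_nonneg_right (show (q - p * k : ℤ) ≤ -1 by omega) hp1
      omega
    obtain ⟨q', hq'⟩ := Int.eq_ofNat_of_zero_le hqk
    obtain rfl : q = q' + p * k := by zify; linarith
    have hm'' : m = q' * (p - 1) + s + 1 := by
      zify
      rw [hm', hq', hcast]
    subst hm''
    rw [← neg_sub (Fp _ _ _), padicValRat.neg, ← neg_sub ((_ : ℕ) : ℚ), padicValRat.neg]
    refine padicValRat_Fp_sub hp hp5 hWdvd hrp hs (by rintro rfl; simp at ht0) fun h => hdvd ?_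
    rw [← dvd_residueCoeff_mul_pow_iff hp hp5 hWdvd r k] at h
    convert h using 2
    ring
end
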